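/- arXiv:math/9803047 — 8 statements merged into one kernel-verified Lean document; each statement's English description precedes it below -/
import Mathlib

section
/- Let r ≥ 1 and let M be an r×r real symmetric matrix that is negative definite and satisfies M i j ≥ 0 for all i ≠ j. Let c ∈ ℝ^r satisfy c i ≥ 0 for all i. Let I be a nonempty subset of Fin r, let M_I be the principal submatrix of M on the rows and columns in I, and let c_I be the restriction of c to I. Then (both M and M_I being invertible since they are negative definite) -c_Iᵀ (M_I)⁻¹ c_I ≤ -cᵀ M⁻¹ c. -/
open Matrix

/-!
Let `P` be positive definite, let `E` have independent columns, and put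
`S = P⁻¹ - E (Eᴴ P E)⁻¹ Eᴴ`. Then `S P` is the `P`-orthogonal projection whose kernel is the range
of `E`, so `S P S = S`. As `S` is Hermitian, `S = Sᴴ P S` is positive semidefinite. When the
columns of `E` are distinct standard basis vectors, `Eᴴ P E` is a principal submatrix of `P`, and
evaluating the form `S` at `c` gives the inequality for `P = -M`.
-/

section Selection

variable {l m n o R : Type*} [DecidableEq n] [NonAssocSemiring R]

theorem one_submatrix_id_mulVec_injective [Fintype m] {f : m → n}
    (hf : Function.Injective f) :
    Function.Injective ((1 : Matrix n n R).submatrix id f).mulVec := by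
  classical
  intro v w hvw
  ext i
  simpa [mulVec, dotProduct, one_apply, hf.eq_iff] using congrFun hvw (f i)

variable [Fintype n]

theorem submatrix_eq_one_submatrix_mul_mul [Fintype o] [DecidableEq o] (A : Matrix n o R)
    (f : l → n) (g : m → o) :
    A.submatrix f g =
      (1 : Matrix n n R).submatrix f id * A * (1 : Matrix o o R).submatrix id g := by
  ext i j
  simp [mul_apply, one_apply]

theorem one_submatrix_mulVec (f : m → n) (v : n → R) :
    (1 : Matrix n n R).submatrix f id *ᵥ v = v ∘ f := by
  ext i
  simp [mulVec, dotProduct, one_apply]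

end Selection

section CommRing

variable {m n R : Type*} [Fintype n] [DecidableEq n] [CommRing R]

theorem nonsing_inv_neg (A : Matrix n n R) : (-A)⁻¹ = -A⁻¹ := by
  by_cases hA : IsUnit A.det
  · exact inv_eq_left_inv (by rw [neg_mul_neg, nonsing_inv_mul A hA])
  · have hA_neg : ¬IsUnit (-A).det := by
      rwa [← isUnit_iff_isUnit_det, IsUnit.neg_iff, isUnit_iff_isUnit_det]
    rw [nonsing_inv_apply_not_isUnit _ hA, nonsing_inv_apply_not_isUnit _ hA_neg, neg_zero]

variable [Fintype m] [DecidableEq m]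

theorem inv_sub_compression_mul_mul_self {A : Matrix n n R} {E : Matrix n m R} {F : Matrix m n R}
    (hA : IsUnit A) (hFAE : IsUnit (F * A * E)) :
    (A⁻¹ - E * (F * A * E)⁻¹ * F) * A * (A⁻¹ - E * (F * A * E)⁻¹ * F) =
      A⁻¹ - E * (F * A * E)⁻¹ * F := by
  set T := E * (F * A * E)⁻¹ * F with hT
  have hA_det : IsUnit A.det := (isUnit_iff_isUnit_det A).1 hA
  have hTAT : T * A * T = T := calc
    T * A * T = E * ((F * A * E)⁻¹ * (F * A * E)) * (F * A * E)⁻¹ * F := by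
      simp only [hT, Matrix.mul_assoc]
    _ = T := by
      rw [nonsing_inv_mul _ ((isUnit_iff_isUnit_det _).1 hFAE), Matrix.mul_one]
  calc
    (A⁻¹ - T) * A * (A⁻¹ - T) = A⁻¹ * A * A⁻¹ - A⁻¹ * A * T - T * (A * A⁻¹) + T * A * T := by
      noncomm_ring
    _ = A⁻¹ - T := by
      rw [nonsing_inv_mul A hA_det, mul_nonsing_inv A hA_det, hTAT, Matrix.one_mul,
        Matrix.one_mul, Matrix.mul_one, sub_add_cancel]

theorem posSemidef_inv_sub_compression [PartialOrder R] [StarRing R] {P : Matrix n n R}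
    {E : Matrix n m R} (hP : P.PosSemidef) (hP_unit : IsUnit P) (hE : IsUnit (Eᴴ * P * E)) :
    (P⁻¹ - E * (Eᴴ * P * E)⁻¹ * Eᴴ).PosSemidef := by
  have hS : (P⁻¹ - E * (Eᴴ * P * E)⁻¹ * Eᴴ).IsHermitian :=
    hP.isHermitian.inv.sub
      (isHermitian_mul_mul_conjTranspose E (isHermitian_conjTranspose_mul_mul E hP.isHermitian).inv)
  have hSPS := hP.conjTranspose_mul_mul_same (P⁻¹ - E * (Eᴴ * P * E)⁻¹ * Eᴴ)
  rwa [hS.eq, inv_sub_compression_mul_mul_self hP_unit hE] at hSPS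

end CommRing

section Field

variable {m n K : Type*} [Fintype m] [Fintype n] [DecidableEq m] [DecidableEq n]
variable [Field K] [PartialOrder K] [StarRing K] [IsOrderedAddMonoid K]

theorem star_dotProduct_inv_compression_mulVec_le {P : Matrix n n K} (hP : P.PosDef)
    {E : Matrix n m K} (hE : Function.Injective E.mulVec) (c : n → K) :
    star (Eᴴ *ᵥ c) ⬝ᵥ ((Eᴴ * P * E)⁻¹ *ᵥ (Eᴴ *ᵥ c)) ≤ star c ⬝ᵥ (P⁻¹ *ᵥ c) := by
  have hS := (posSemidef_inv_sub_compression hP.posSemidef hP.isUnit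
    (hP.conjTranspose_mul_mul_same hE).isUnit).dotProduct_mulVec_nonneg c
  rw [sub_mulVec, dotProduct_sub, sub_nonneg] at hS
  simpa only [star_mulVec, conjTranspose_conjTranspose, mulVec_mulVec, ← dotProduct_mulVec,
    Matrix.mul_assoc] using hS

theorem star_dotProduct_inv_submatrix_mulVec_le {P : Matrix n n K} (hP : P.PosDef) {f : m → n}
    (hf : Function.Injective f) (c : n → K) :
    star (c ∘ f) ⬝ᵥ ((P.submatrix f f)⁻¹ *ᵥ (c ∘ f)) ≤ star c ⬝ᵥ (P⁻¹ *ᵥ c) := by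
  have hle := star_dotProduct_inv_compression_mulVec_le hP
    (one_submatrix_id_mulVec_injective hf) c
  rwa [conjTranspose_submatrix, conjTranspose_one, one_submatrix_mulVec,
    ← submatrix_eq_one_submatrix_mul_mul] at hle

theorem negK2_submatrix_le_general {M : Matrix n n K} (hM : M.IsHermitian)
    (hnegdef : ∀ x : n → K, x ≠ 0 → star x ⬝ᵥ (M *ᵥ x) < 0)
    {f : m → n} (hf : Function.Injective f) (c : n → K) :
    -(star (c ∘ f) ⬝ᵥ ((M.submatrix f f)⁻¹ *ᵥ (c ∘ f))) ≤ -(star c ⬝ᵥ (M⁻¹ *ᵥ c)) := by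
  have hP : (-M).PosDef := .of_dotProduct_mulVec_pos hM.neg fun x hx ↦ by
    simpa only [neg_mulVec, dotProduct_neg, neg_pos] using hnegdef x hx
  simpa only [submatrix_neg, Pi.neg_apply, nonsing_inv_neg, neg_mulVec, dotProduct_neg] using
    star_dotProduct_inv_submatrix_mulVec_le hP hf c

end Field

/-- **Proposition 1.2 (matrix form).** For a negative definite symmetric real matrix `M`
with nonnegative off-diagonal entries and a nonnegative vector `c`, restricting to a
nonempty principal submatrix does not increase `-cᵀ M⁻¹ c`. -/
theorem negK2_submatrix_le (r : ℕ) (hr : 1 ≤ r)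
    (M : Matrix (Fin r) (Fin r) ℝ) (hsymm : M.IsSymm)
    (hnegdef : ∀ x : Fin r → ℝ, x ≠ 0 → x ⬝ᵥ (M *ᵥ x) < 0)
    (hoffdiag : ∀ i j : Fin r, i ≠ j → 0 ≤ M i j)
    (c : Fin r → ℝ) (hc : ∀ i, 0 ≤ c i)
    (I : Finset (Fin r)) (hI : I.Nonempty) :
    - ((fun x : {i // i ∈ I} => c x.1) ⬝ᵥ
        ((M.submatrix (fun x : {i // i ∈ I} => x.1) (fun x : {i // i ∈ I} => x.1))⁻¹ *ᵥ
          (fun x : {i // i ∈ I} => c x.1)))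
      ≤ - (c ⬝ᵥ (M⁻¹ *ᵥ c)) := by
  exact negK2_submatrix_le_general (isHermitian_iff_isSymm.2 hsymm) hnegdef
    Subtype.val_injective c
end

section
/- Let r ≥ 1 and let M be an r×r real symmetric matrix that is negative definite and satisfies M i j ≥ 0 for all i ≠ j. Let c ∈ ℝ^r satisfy c i ≥ 0 for all i. Then every entry of the vector M⁻¹ c is ≤ 0. -/
open Matrix

/-! If `M x ≥ 0`, write `x = x⁺ - x⁻` and pair with `x⁺`: then `x⁺ ⬝ M x⁺ = x⁺ ⬝ M x + x⁺ ⬝ M x⁻`.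
The first summand is nonnegative by assumption. The second sees only off-diagonal entries of `M`,
because `x⁺` and `x⁻` have disjoint supports, so it is nonnegative too. As the form of `M` is
negative at nonzero nonnegative vectors, `x⁺ = 0`. Applied to `x` and `-x`, this maximum principle
also shows that `M` has trivial kernel. -/

section Ring

variable {n R : Type*} [Fintype n] [Ring R] [LinearOrder R] [IsOrderedRing R] {M : Matrix n n R}

lemma posPart_dotProduct_mulVec_negPart_nonneg (hoffdiag : ∀ i j, i ≠ j → 0 ≤ M i j) (x : n → R) :
    0 ≤ x⁺ ⬝ᵥ (M *ᵥ x⁻) := by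
  simp only [dotProduct, mulVec, Finset.mul_sum]
  refine Finset.sum_nonneg fun i _ => Finset.sum_nonneg fun j _ => ?_
  obtain rfl | hij := eq_or_ne i j
  · obtain hx | hx := le_total (x i) 0
    · simp [posPart_eq_zero.mpr hx]
    · simp [negPart_eq_zero.mpr hx]
  · exact mul_nonneg (posPart_nonneg x i) (mul_nonneg (hoffdiag i j hij) (negPart_nonneg x j))

lemma nonpos_of_mulVec_nonneg (hneg : ∀ x : n → R, 0 < x → x ⬝ᵥ (M *ᵥ x) < 0)
    (hoffdiag : ∀ i j, i ≠ j → 0 ≤ M i j) {x : n → R} (hx : 0 ≤ M *ᵥ x) : x ≤ 0 := by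
  have hform : 0 ≤ x⁺ ⬝ᵥ (M *ᵥ x⁺) :=
    calc
      0 ≤ x⁺ ⬝ᵥ (M *ᵥ x) + x⁺ ⬝ᵥ (M *ᵥ x⁻) :=
        add_nonneg (dotProduct_nonneg_of_nonneg (posPart_nonneg x) hx)
          (posPart_dotProduct_mulVec_negPart_nonneg hoffdiag x)
      _ = x⁺ ⬝ᵥ (M *ᵥ x⁺) := by
        rw [← dotProduct_add, ← mulVec_add, ← sub_eq_iff_eq_add.mp (posPart_sub_negPart x)]
  rw [← posPart_eq_zero]
  by_contra hpos
  exact hform.not_gt (hneg x⁺ ((posPart_nonneg x).lt_of_ne' hpos))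

end Ring

lemma det_ne_zero_of_dotProduct_mulVec_neg {n R : Type*} [Fintype n] [DecidableEq n] [CommRing R]
    [LinearOrder R] [IsStrictOrderedRing R] {M : Matrix n n R}
    (hneg : ∀ x : n → R, 0 < x → x ⬝ᵥ (M *ᵥ x) < 0) (hoffdiag : ∀ i j, i ≠ j → 0 ≤ M i j) :
    M.det ≠ 0 := by
  intro hdet
  obtain ⟨v, hv, hMv⟩ := exists_mulVec_eq_zero_iff.mpr hdet
  have hv_nonpos : v ≤ 0 := nonpos_of_mulVec_nonneg hneg hoffdiag hMv.ge
  have hv_nonneg : 0 ≤ v :=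
    neg_nonpos.mp (nonpos_of_mulVec_nonneg hneg hoffdiag (by rw [mulVec_neg, hMv, neg_zero]))
  exact hv (hv_nonpos.antisymm hv_nonneg)

theorem inv_mulVec_nonpos_general {n K : Type*} [Fintype n] [DecidableEq n] [Field K]
    [LinearOrder K] [IsStrictOrderedRing K] {M : Matrix n n K}
    (hneg : ∀ x : n → K, 0 < x → x ⬝ᵥ (M *ᵥ x) < 0) (hoffdiag : ∀ i j, i ≠ j → 0 ≤ M i j)
    {c : n → K} (hc : 0 ≤ c) : M⁻¹ *ᵥ c ≤ 0 := by
  have hdet : IsUnit M.det := (det_ne_zero_of_dotProduct_mulVec_neg hneg hoffdiag).isUnit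
  refine nonpos_of_mulVec_nonneg hneg hoffdiag ?_
  rwa [mulVec_mulVec, mul_nonsing_inv M hdet, one_mulVec]

/-- **Lemma 1.8(i) (general form).** If `M` is a symmetric negative definite real matrix with
nonnegative off-diagonal entries and `c` is a vector with nonnegative entries, then every entry
of `M⁻¹ c` is nonpositive. -/
theorem inv_mulVec_nonpos (r : ℕ) (hr : 1 ≤ r)
    (M : Matrix (Fin r) (Fin r) ℝ) (hsymm : M.IsSymm)
    (hnegdef : ∀ x : Fin r → ℝ, x ≠ 0 → x ⬝ᵥ (M *ᵥ x) < 0)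
    (hoffdiag : ∀ i j : Fin r, i ≠ j → 0 ≤ M i j)
    (c : Fin r → ℝ) (hc : ∀ i, 0 ≤ c i) :
    ∀ i : Fin r, (M⁻¹ *ᵥ c) i ≤ 0 :=
  inv_mulVec_nonpos_general (fun x hx => hnegdef x hx.ne') hoffdiag hc
end

section
/- Let (M, p) be a resolution datum of size r with c ≠ 0 (i.e., not every index i has p i = 0 and M i i = -2). Then -cᵀ M⁻¹ c ≥ 1/3, and equality holds if and only if r = 1, M = (-3) and p = 0. -/
open Matrix

structure ResolutionDatum (r : ℕ) where
  M : Matrix (Fin r) (Fin r) ℤ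
  p : Fin r → ℕ
  symm : M.IsSymm
  negdef : ∀ x : Fin r → ℝ, x ≠ 0 → x ⬝ᵥ ((M.map (Int.cast : ℤ → ℝ)) *ᵥ x) < 0
  offdiag_nonneg : ∀ i j : Fin r, i ≠ j → 0 ≤ M i j
  diag_le_neg_two : ∀ i : Fin r, p i = 0 → M i i ≤ -2
  connected : (SimpleGraph.fromRel (fun i j : Fin r => 0 < M i j)).Connected

/-- The vector `c i = 2 p i - 2 - M i i` (the values `K · A_i`). -/
def ResolutionDatum.c {r : ℕ} (D : ResolutionDatum r) : Fin r → ℚ :=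
  fun i => 2 * (D.p i : ℚ) - 2 - (D.M i i : ℚ)

/-- `-K² = -cᵀ M⁻¹ c`. -/
noncomputable def ResolutionDatum.negK2 {r : ℕ} (D : ResolutionDatum r) : ℚ :=
  - (D.c ⬝ᵥ ((D.M.map (Int.cast : ℤ → ℚ))⁻¹ *ᵥ D.c))

/-- The set of all values `-K²` of normal surface singularities. -/
def negK2Set : Set ℝ :=
  { x : ℝ | ∃ (r : ℕ) (_ : 0 < r) (D : ResolutionDatum r), x = (D.negK2 : ℝ) }

/-!
Write `K` for the canonical cycle and `A i` for the exceptional curves. The Cauchy-Schwarz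
inequality for the negative of the intersection form, applied to `K` and a single curve, gives
`(K · A i)² / -(A i)² ≤ -K²`, with equality iff `K` is a multiple of `A i`. By adjunction, a curve
with `K · A i ≠ 0` makes the left-hand side at least `1/3`, with equality only for a rational
`(-3)`-curve. If `K = t A i`, then `t < 0`, so a curve `A j` meeting `A i` would have `K · A j < 0`,
which adjunction forbids; by connectedness `A i` is then the only curve.
-/

section CauchySchwarz

variable {F V : Type*} [Field F] [LinearOrder F] [IsStrictOrderedRing F] [AddCommGroup V]
  [Module F V] {B : LinearMap.BilinForm F V}

lemma bilinForm_sq_div_le (hpos : ∀ x, x ≠ 0 → 0 < B x x) (hsymm : B.IsSymm) (x y : V) :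
    B x y ^ 2 / B x x ≤ B y y := by
  have hnonneg (z : V) : 0 ≤ B z z := by
    obtain rfl | hz := eq_or_ne z 0
    · simp
    · exact (hpos z hz).le
  have hsq := B.apply_sq_le_of_symm hnonneg (LinearMap.BilinForm.isSymm_iff.mp hsymm) x y
  exact div_le_of_le_mul₀ (hnonneg x) (hnonneg y) (mul_comm (B x x) _ ▸ hsq)

lemma bilinForm_sq_div_eq_iff_exists_smul_eq (hpos : ∀ x, x ≠ 0 → 0 < B x x) (hsymm : B.IsSymm)
    {x : V} (hx : x ≠ 0) (y : V) :
    B x y ^ 2 / B x x = B y y ↔ ∃ t : F, t • x = y := by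
  have hlt : B x y ^ 2 / B x x < B y y ↔ ∀ t : F, t • x ≠ y := by
    rw [div_lt_iff₀' (hpos x hx), B.apply_sq_lt_iff_linearIndependent_of_symm hpos
      (LinearMap.BilinForm.isSymm_iff.mp hsymm), LinearIndependent.pair_iff' hx]
  rw [← (bilinForm_sq_div_le hpos hsymm x y).not_lt_iff_eq, hlt, not_forall_not]

end CauchySchwarz

namespace ResolutionDatum

variable {r : ℕ} (D : ResolutionDatum r)

/-- The intersection pairing on `ℚ`-cycles supported on the exceptional divisor. The curve `A i` is
encoded as `Pi.single i 1`. -/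
noncomputable def intersectionForm : LinearMap.BilinForm ℚ (Fin r → ℚ) :=
  (D.M.map (Int.cast : ℤ → ℚ)).toBilin'

lemma intersectionForm_apply (x y : Fin r → ℚ) :
    D.intersectionForm x y = x ⬝ᵥ (D.M.map (Int.cast : ℤ → ℚ)) *ᵥ y :=
  toBilin'_apply' _ x y

lemma intersectionForm_single_single (i j : Fin r) :
    D.intersectionForm (Pi.single i 1) (Pi.single j 1) = D.M i j := by
  simp [intersectionForm]

lemma intersectionForm_isSymm : D.intersectionForm.IsSymm :=
  isSymm_toBilin'_iff_isSymm.mpr (D.symm.map _)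

lemma intersectionForm_self_neg (x : Fin r → ℚ) (hx : x ≠ 0) : D.intersectionForm x x < 0 := by
  have hxR : (fun i => (x i : ℝ)) ≠ 0 := fun h => hx <| funext fun i => by
    simpa using congrFun h i
  have h := D.negdef _ hxR
  simp only [intersectionForm_apply, dotProduct, mulVec, map_apply] at h ⊢
  exact_mod_cast h

lemma diag_neg (i : Fin r) : D.M i i < 0 := by
  have h := D.intersectionForm_self_neg (Pi.single i 1) (by simp)
  rwa [intersectionForm_single_single, Int.cast_lt_zero] at h

lemma isUnit_det : IsUnit (D.M.map (Int.cast : ℤ → ℚ)).det := by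
  rw [isUnit_iff_ne_zero]
  intro hdet
  obtain ⟨v, hv, hMv⟩ := exists_mulVec_eq_zero_iff.mpr hdet
  simpa [intersectionForm_apply, hMv] using D.intersectionForm_self_neg v hv

/-- The numerical canonical cycle `K`: the `ℚ`-cycle supported on the exceptional divisor with
`K · A i = c i` for every `i`. -/
noncomputable def canonicalCycle : Fin r → ℚ :=
  (D.M.map (Int.cast : ℤ → ℚ))⁻¹ *ᵥ D.c

lemma intersectionForm_canonicalCycle (x : Fin r → ℚ) :
    D.intersectionForm x D.canonicalCycle = x ⬝ᵥ D.c := by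
  rw [intersectionForm_apply, canonicalCycle, mulVec_mulVec, mul_nonsing_inv _ D.isUnit_det,
    one_mulVec]

lemma negK2_eq_neg_intersectionForm :
    D.negK2 = -D.intersectionForm D.canonicalCycle D.canonicalCycle := by
  rw [intersectionForm_canonicalCycle, dotProduct_comm, negK2, canonicalCycle]

lemma c_nonneg (i : Fin r) : 0 ≤ D.c i := by
  have hc : 0 ≤ 2 * (D.p i : ℤ) - 2 - D.M i i := by
    have := D.diag_neg i
    have := D.diag_le_neg_two i
    omega
  unfold c
  exact_mod_cast hc

lemma c_sq_div_le_negK2 (i : Fin r) : D.c i ^ 2 / -D.M i i ≤ D.negK2 := by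
  have h := bilinForm_sq_div_le (B := -D.intersectionForm)
    (by simpa using D.intersectionForm_self_neg) D.intersectionForm_isSymm.neg
    (Pi.single i 1) D.canonicalCycle
  simpa [intersectionForm_canonicalCycle, intersectionForm_single_single,
    negK2_eq_neg_intersectionForm] using h

lemma c_sq_div_eq_negK2_iff_exists_smul_eq (i : Fin r) :
    D.c i ^ 2 / -D.M i i = D.negK2 ↔ ∃ t : ℚ, t • Pi.single i 1 = D.canonicalCycle := by
  rw [← bilinForm_sq_div_eq_iff_exists_smul_eq (B := -D.intersectionForm)
    (by simpa using D.intersectionForm_self_neg) D.intersectionForm_isSymm.neg (by simp)]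
  simp [intersectionForm_canonicalCycle, intersectionForm_single_single,
    negK2_eq_neg_intersectionForm]

lemma subsingleton_of_smul_single_eq_canonicalCycle {i : Fin r} (hi : D.c i ≠ 0) {t : ℚ}
    (ht : t • Pi.single i 1 = D.canonicalCycle) : Subsingleton (Fin r) := by
  have hc (j : Fin r) : D.c j = t * D.M j i := by
    simpa [← ht, intersectionForm_single_single] using
      (D.intersectionForm_canonicalCycle (Pi.single j 1)).symm
  have htneg : t < 0 := by
    have hMi : (D.M i i : ℚ) < 0 := by exact_mod_cast D.diag_neg i
    exact neg_of_mul_pos_left (hc i ▸ (D.c_nonneg i).lt_of_ne' hi) hMi.le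
  by_contra hnontrivial
  rw [not_subsingleton_iff_nontrivial] at hnontrivial
  obtain ⟨j, hj⟩ := D.connected.preconnected.exists_adj_of_nontrivial i
  rw [SimpleGraph.fromRel_adj, ← D.symm.apply i j, or_self] at hj
  have hMj : (0 : ℚ) < D.M j i := by exact_mod_cast hj.2
  exact (D.c_nonneg j).not_gt (hc j ▸ mul_neg_of_neg_of_pos htneg hMj)

lemma c_sq_div_eq_negK2_iff_subsingleton {i : Fin r} (hi : D.c i ≠ 0) :
    D.c i ^ 2 / -D.M i i = D.negK2 ↔ Subsingleton (Fin r) := by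
  rw [c_sq_div_eq_negK2_iff_exists_smul_eq]
  constructor
  · rintro ⟨t, ht⟩
    exact D.subsingleton_of_smul_single_eq_canonicalCycle hi ht
  · intro _
    refine ⟨D.canonicalCycle i, funext fun j => ?_⟩
    rw [Subsingleton.elim j i]
    simp

lemma one_third_lt_c_sq_div_of_p_ne_zero {i : Fin r} (hp : D.p i ≠ 0) :
    1 / 3 < D.c i ^ 2 / -D.M i i := by
  have hM : 1 ≤ -(D.M i i : ℚ) := by
    have := D.diag_neg i
    exact_mod_cast (show 1 ≤ -D.M i i by omega)
  have hpi : (1 : ℚ) ≤ D.p i := by exact_mod_cast Nat.one_le_iff_ne_zero.mpr hp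
  have hc : -(D.M i i : ℚ) ≤ D.c i := by
    rw [c]
    linarith
  rw [lt_div_iff₀ (by linarith)]
  nlinarith

lemma diag_le_neg_three_of_p_eq_zero {i : Fin r} (hi : D.c i ≠ 0) (hp : D.p i = 0) :
    D.M i i ≤ -3 := by
  have hne : D.M i i ≠ -2 := fun h => hi (by simp [c, hp, h])
  have := D.diag_le_neg_two i hp
  omega

lemma c_sq_div_sub_one_third_of_p_eq_zero {i : Fin r} (hp : D.p i = 0) :
    D.c i ^ 2 / -D.M i i - 1 / 3 =
      (3 * -D.M i i - 4) * (-D.M i i - 3) / (3 * -D.M i i) := by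
  have hM : (D.M i i : ℚ) ≠ 0 := by exact_mod_cast (D.diag_neg i).ne
  simp only [c, hp, Nat.cast_zero]
  field_simp
  ring

lemma one_third_le_c_sq_div {i : Fin r} (hi : D.c i ≠ 0) : 1 / 3 ≤ D.c i ^ 2 / -D.M i i := by
  by_cases hp : D.p i = 0
  · have hM : (D.M i i : ℚ) ≤ -3 := by exact_mod_cast D.diag_le_neg_three_of_p_eq_zero hi hp
    rw [← sub_nonneg, D.c_sq_div_sub_one_third_of_p_eq_zero hp]
    exact div_nonneg (mul_nonneg (by linarith) (by linarith)) (by linarith)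
  · exact (D.one_third_lt_c_sq_div_of_p_ne_zero hp).le

lemma c_sq_div_eq_one_third_iff {i : Fin r} (hi : D.c i ≠ 0) :
    D.c i ^ 2 / -D.M i i = 1 / 3 ↔ D.p i = 0 ∧ D.M i i = -3 := by
  by_cases hp : D.p i = 0
  · have hM : (D.M i i : ℚ) ≤ -3 := by exact_mod_cast D.diag_le_neg_three_of_p_eq_zero hi hp
    have hfactor : 3 * -(D.M i i : ℚ) - 4 ≠ 0 := by linarith
    have hdenom : 3 * -(D.M i i : ℚ) ≠ 0 := by linarith
    rw [← sub_eq_zero, D.c_sq_div_sub_one_third_of_p_eq_zero hp, div_eq_zero_iff,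
      or_iff_left hdenom, mul_eq_zero, or_iff_right hfactor, sub_eq_zero, neg_eq_iff_eq_neg]
    norm_cast
    simp [hp]
  · exact iff_of_false (D.one_third_lt_c_sq_div_of_p_ne_zero hp).ne' fun h => hp h.1

end ResolutionDatum

/-- **Theorem 1.4.** For a normal surface singularity which is not a rational double point
(i.e. `c ≠ 0`), one has `-K² ≥ 1/3`, with equality iff the singularity is the cyclic
quotient singularity `X_{3,1}` (one exceptional rational curve of self-intersection `-3`). -/
theorem negK2_lower_bound (r : ℕ) (hr : 0 < r) (D : ResolutionDatum r)
    (hc : D.c ≠ 0) :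
    (1 : ℚ) / 3 ≤ D.negK2 ∧
      (D.negK2 = 1 / 3 ↔ r = 1 ∧ (∀ i j : Fin r, D.M i j = -3) ∧ ∀ i : Fin r, D.p i = 0) := by
  obtain ⟨i, hi⟩ := Function.ne_iff.mp hc
  have hcurve := D.one_third_le_c_sq_div hi
  have hcauchy := D.c_sq_div_le_negK2 i
  refine ⟨hcurve.trans hcauchy, ?_⟩
  calc D.negK2 = 1 / 3
    _ ↔ D.c i ^ 2 / -D.M i i = 1 / 3 ∧ D.c i ^ 2 / -D.M i i = D.negK2 := by grind
    _ ↔ (D.p i = 0 ∧ D.M i i = -3) ∧ Subsingleton (Fin r) :=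
      and_congr (D.c_sq_div_eq_one_third_iff hi) (D.c_sq_div_eq_negK2_iff_subsingleton hi)
    _ ↔ r = 1 ∧ (∀ i j : Fin r, D.M i j = -3) ∧ ∀ i : Fin r, D.p i = 0 := by
      constructor
      · rintro ⟨⟨hp, hM⟩, hsub⟩
        refine ⟨le_antisymm (Fin.subsingleton_iff_le_one.mp hsub) hr, fun j k => ?_, fun j => ?_⟩
        · rwa [Subsingleton.elim j i, Subsingleton.elim k i]
        · rwa [Subsingleton.elim j i]
      · rintro ⟨rfl, hM, hp⟩
        exact ⟨⟨hp i, hM i i⟩, inferInstance⟩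
end

section
/- Let r ≥ 2 and n ≥ 1 be integers. Let M be an r×r real symmetric matrix with M 1 1 = M 2 2 = -2 and M 1 2 = M 2 1 = 1. Define the (r+n)×(r+n) real symmetric matrix M' by: M' i j = M i j for 1 ≤ i, j ≤ r except M' 1 2 = M' 2 1 = 0; M' (r+a) (r+a) = -2 for 1 ≤ a ≤ n; M' (r+a) (r+a+1) = M' (r+a+1) (r+a) = 1 for 1 ≤ a ≤ n-1; M' 1 (r+1) = M' (r+1) 1 = 1; M' 2 (r+n) = M' (r+n) 2 = 1; and all other entries involving an index > r are 0. Let F be the n×n block of M' on the last n indices and B the r×n block of M' coupling the first r indices to the last n. Then F is invertible, and the Schur complement M - with its (1,1),(2,2) entries and (1,2),(2,1) entries - namely M'_{EE} - B F⁻¹ Bᵀ, equals the matrix M_n obtained from M by replacing the (1,1) and (2,2) entries by -(n+2)/(n+1) and the (1,2) and (2,1) entries by 1/(n+1). Moreover, if M' is negative definite and c ∈ ℝ^r satisfies c 1 = c 2 = 0, then, setting c' = (c, 0) ∈ ℝ^{r+n}, one has c'ᵀ (M')⁻¹ c' = cᵀ (M_n)⁻¹ c. -/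
open Matrix

/-- The intersection matrix of an inserted chain of `n` (-2)-curves. -/
noncomputable def chainF (n : ℕ) : Matrix (Fin n) (Fin n) ℝ :=
  fun a b => if a = b then -2 else if (a : ℕ) + 1 = (b : ℕ) ∨ (b : ℕ) + 1 = (a : ℕ) then 1 else 0

/-- The block coupling the original `r` curves to the inserted chain: the first prop (index 0)
meets the first curve of the chain and the second prop (index 1) meets the last one. -/
noncomputable def coupB (r n : ℕ) : Matrix (Fin r) (Fin n) ℝ :=
  fun i a => if (i : ℕ) = 0 ∧ (a : ℕ) = 0 then 1
    else if (i : ℕ) = 1 ∧ (a : ℕ) + 1 = n then 1 else 0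

/-- The original matrix with the `(0,1)` and `(1,0)` entries replaced by `0`. -/
noncomputable def modifiedE {r : ℕ} (M : Matrix (Fin r) (Fin r) ℝ) :
    Matrix (Fin r) (Fin r) ℝ :=
  fun i j => if ((i : ℕ) = 0 ∧ (j : ℕ) = 1) ∨ ((i : ℕ) = 1 ∧ (j : ℕ) = 0) then 0 else M i j

/-- The intersection matrix `M'` of the `(-2)`-insertion of a chain of `n` `(-2)`-curves. -/
noncomputable def insertedMatrix {r : ℕ} (M : Matrix (Fin r) (Fin r) ℝ) (n : ℕ) :
    Matrix (Fin r ⊕ Fin n) (Fin r ⊕ Fin n) ℝ :=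
  Matrix.fromBlocks (modifiedE M) (coupB r n) (coupB r n)ᵀ (chainF n)

/-- The matrix `M_n`, obtained from `M` by replacing the `(0,0)`, `(1,1)` entries by
`-(n+2)/(n+1)` and the `(0,1)`, `(1,0)` entries by `1/(n+1)`. -/
noncomputable def contractedMatrix {r : ℕ} (M : Matrix (Fin r) (Fin r) ℝ) (n : ℕ) :
    Matrix (Fin r) (Fin r) ℝ :=
  fun i j =>
    if ((i : ℕ) = 0 ∧ (j : ℕ) = 0) ∨ ((i : ℕ) = 1 ∧ (j : ℕ) = 1) then
      -((n : ℝ) + 2) / ((n : ℝ) + 1)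
    else if ((i : ℕ) = 0 ∧ (j : ℕ) = 1) ∨ ((i : ℕ) = 1 ∧ (j : ℕ) = 0) then 1 / ((n : ℝ) + 1)
    else M i j

/-!
Read a divisor supported on the chain and its two props as a function `g` on `{0, ..., n + 1}`, the
props sitting at the endpoints. Its intersection number with a curve of the chain is a second
difference of `g`, so the divisors orthogonal to the chain are the affine functions. An affine
function vanishing at both ends is zero, which makes the chain block `F` invertible; and the affine
functions with boundary values `(1, 0)` and `(0, 1)` solve `F X = -Bᵀ`, so that the Schur complement
is obtained by reading off their values next to the endpoints. Finally, the inverse of the Schur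
complement is the corresponding diagonal block of the inverse of the whole matrix.
-/

section BlockMatrices

variable {m n m' n' R K : Type*} [Fintype m] [Fintype n] [Fintype m'] [Fintype n']

theorem sumElim_zero_dotProduct_mulVec_sumElim_zero [NonUnitalNonAssocSemiring R]
    (A : Matrix (m ⊕ n) (m' ⊕ n') R) (x : m → R) (y : m' → R) :
    Sum.elim x (0 : n → R) ⬝ᵥ (A *ᵥ Sum.elim y (0 : n' → R)) = x ⬝ᵥ (A.toBlocks₁₁ *ᵥ y) := by
  rw [← A.fromBlocks_toBlocks, fromBlocks_mulVec, sumElim_dotProduct_sumElim]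
  simp

variable [DecidableEq m] [DecidableEq n]

theorem isUnit_of_dotProduct_mulVec_self_ne_zero [Field K] {A : Matrix n n K}
    (hA : ∀ x, x ≠ 0 → x ⬝ᵥ (A *ᵥ x) ≠ 0) : IsUnit A := by
  rw [isUnit_iff_isUnit_det, isUnit_iff_ne_zero]
  intro hdet
  obtain ⟨x, hx, hAx⟩ := exists_mulVec_eq_zero_iff.mpr hdet
  exact hA x hx (by rw [hAx, dotProduct_zero])

theorem toBlocks₁₁_inv_fromBlocks [CommRing R] {A : Matrix m m R} {B : Matrix m n R}
    {C : Matrix n m R} {D : Matrix n n R} (hD : IsUnit D) (h : IsUnit (fromBlocks A B C D)) :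
    (fromBlocks A B C D)⁻¹.toBlocks₁₁ = (A - B * D⁻¹ * C)⁻¹ := by
  let := hD.invertible
  let := h.invertible
  let := invertibleOfFromBlocks₂₂Invertible A B C D
  rw [← invOf_eq_nonsing_inv (fromBlocks A B C D), invOf_fromBlocks₂₂_eq, toBlocks_fromBlocks₁₁,
    invOf_eq_nonsing_inv, invOf_eq_nonsing_inv]

end BlockMatrices

theorem eq_add_mul_of_second_difference_eq_zero {R : Type*} [CommRing R] {g : ℕ → R} {n : ℕ}
    (hg : ∀ k < n, g k - 2 * g (k + 1) + g (k + 2) = 0) {k : ℕ} (hk : k ≤ n + 1) :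
    g k = g 0 + k * (g 1 - g 0) := by
  induction k using Nat.twoStepInduction with
  | zero => simp
  | one => simp
  | more k ih₀ ih₁ =>
    have hrec := hg k (by omega)
    have hk₀ := ih₀ (by omega)
    have hk₁ := ih₁ (by omega)
    push_cast at hk₁ ⊢
    linear_combination hrec - hk₀ + 2 * hk₁

theorem sum_fin_ite_add_one_eq {R : Type*} [AddCommMonoid R] (n : ℕ) (g : ℕ → R) (m : ℕ) :
    ∑ k : Fin n, (if (k : ℕ) + 1 = m then g (k + 1) else 0) =
      if 0 < m ∧ m ≤ n then g m else 0 := by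
  rw [Fin.sum_univ_eq_sum_range (fun k => if k + 1 = m then g (k + 1) else 0)]
  cases m with
  | zero => simp
  | succ m => simp

theorem chainF_mulVec_apply_add_boundary {n : ℕ} (g : ℕ → ℝ) (a : Fin n) :
    (chainF n *ᵥ fun k => g (k + 1)) a
        + ((if (a : ℕ) = 0 then g 0 else 0) + if (a : ℕ) + 1 = n then g (n + 1) else 0) =
      g a - 2 * g (a + 1) + g (a + 2) := by
  have hrow (k : Fin n) : chainF n a k * g (k + 1) =
      (if (k : ℕ) + 1 = a then g (k + 1) else 0)
        - 2 * (if (k : ℕ) + 1 = a + 1 then g (k + 1) else 0)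
        + (if (k : ℕ) + 1 = a + 2 then g (k + 1) else 0) := by
    simp only [chainF, Fin.ext_iff]
    split_ifs <;> first | omega | ring
  simp only [mulVec, dotProduct, hrow, Finset.sum_add_distrib, Finset.sum_sub_distrib,
    ← Finset.mul_sum, sum_fin_ite_add_one_eq]
  have := a.isLt
  grind

theorem coupB_mulVec_apply {r n : ℕ} (hn : 0 < n) (g : ℕ → ℝ) (i : Fin r) :
    (coupB r n *ᵥ fun k => g (k + 1)) i =
      if (i : ℕ) = 0 then g 1 else if (i : ℕ) = 1 then g n else 0 := by
  have hrow (k : Fin n) : coupB r n i k * g (k + 1) =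
      if (i : ℕ) = 0 then (if (k : ℕ) + 1 = 1 then g (k + 1) else 0)
      else if (i : ℕ) = 1 then (if (k : ℕ) + 1 = n then g (k + 1) else 0) else 0 := by
    simp only [coupB]
    split_ifs <;> first | omega | ring
  simp only [mulVec, dotProduct, hrow]
  split_ifs
  · rw [sum_fin_ite_add_one_eq, if_pos ⟨one_pos, hn⟩]
  · rw [sum_fin_ite_add_one_eq, if_pos ⟨hn, le_rfl⟩]
  · exact Finset.sum_const_zero

theorem isUnit_chainF (n : ℕ) : IsUnit (chainF n) := by
  rw [isUnit_iff_isUnit_det, isUnit_iff_ne_zero]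
  intro hdet
  obtain ⟨v, hv, hFv⟩ := exists_mulVec_eq_zero_iff.mpr hdet
  apply hv
  let g : ℕ → ℝ := Function.extend (fun k : Fin n => (k : ℕ) + 1) v 0
  have hinj : Function.Injective fun k : Fin n => (k : ℕ) + 1 :=
    (add_left_injective 1).comp Fin.val_injective
  have hgv (k : Fin n) : g (k + 1) = v k := hinj.extend_apply v 0 k
  have hg₀ : g 0 = 0 := Function.extend_apply' v _ 0 fun ⟨k, hk⟩ => Nat.succ_ne_zero k hk
  have hgn : g (n + 1) = 0 :=
    Function.extend_apply' v _ (n + 1) fun ⟨k, hk⟩ => k.isLt.ne (Nat.succ_injective hk)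
  have hharmonic (k : ℕ) (hk : k < n) : g k - 2 * g (k + 1) + g (k + 2) = 0 := by
    rw [← chainF_mulVec_apply_add_boundary g ⟨k, hk⟩, funext hgv, hFv, hg₀, hgn]
    simp
  have hg₁ : g 1 = 0 := by
    have hend := eq_add_mul_of_second_difference_eq_zero hharmonic le_rfl
    simpa [hg₀, hgn, Nat.cast_add_one_ne_zero] using hend
  ext k
  rw [← hgv, eq_add_mul_of_second_difference_eq_zero hharmonic (by omega), hg₀, hg₁]
  simp

/-- The multiplicity, at position `m` of the chain, of the divisor `E_i + Σ x_a F_a` orthogonal to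
the chain, that is, of the pullback of the image of `E_i` under the contraction. Position `m` is
that of `F_m`, and positions `0` and `n + 1` are those of the props `E_0` and `E_1`, where the
multiplicity is the one in `E_i`. -/
noncomputable def affineExtension (n i m : ℕ) : ℝ :=
  if i = 0 then 1 - m / (n + 1) else if i = 1 then m / (n + 1) else 0

theorem chainF_mul_affineExtension (r n : ℕ) :
    chainF n * of (fun (a : Fin n) (i : Fin r) => affineExtension n i (a + 1)) =
      -(coupB r n)ᵀ := by
  ext a i
  have hbdry : (coupB r n)ᵀ a i =
      (if (a : ℕ) = 0 then affineExtension n i 0 else 0) +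
        if (a : ℕ) + 1 = n then affineExtension n i (n + 1) else 0 := by
    have hn : (n : ℝ) + 1 ≠ 0 := by positivity
    by_cases h₀ : (i : ℕ) = 0
    · simp [coupB, affineExtension, h₀, hn]
    by_cases h₁ : (i : ℕ) = 1 <;> simp [coupB, affineExtension, h₀, h₁, hn]
  have hharmonic : affineExtension n i a - 2 * affineExtension n i (a + 1)
      + affineExtension n i (a + 2) = 0 := by
    simp only [affineExtension]
    push_cast
    split_ifs <;> ring
  rw [← chainF_mulVec_apply_add_boundary, ← hbdry] at hharmonic
  exact eq_neg_of_add_eq_zero_left hharmonic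

theorem coupB_mul_inv_chainF_mul_transpose_apply {r n : ℕ} (hn : 0 < n) (i j : Fin r) :
    (coupB r n * (chainF n)⁻¹ * (coupB r n)ᵀ) i j =
      -if (i : ℕ) = 0 then affineExtension n j 1
        else if (i : ℕ) = 1 then affineExtension n j n else 0 := by
  let := (isUnit_chainF n).invertible
  rw [Matrix.mul_assoc, ← neg_neg (coupB r n)ᵀ, ← chainF_mul_affineExtension, Matrix.mul_neg,
    inv_mul_cancel_left_of_invertible, Matrix.mul_neg, neg_apply, ← coupB_mulVec_apply hn]
  rfl

theorem schurComplement_chainF_eq_contractedMatrix {r n : ℕ} (hr : 1 < r) (hn : 0 < n)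
    {M : Matrix (Fin r) (Fin r) ℝ} (h00 : M ⟨0, pos_of_gt hr⟩ ⟨0, pos_of_gt hr⟩ = -2)
    (h11 : M ⟨1, hr⟩ ⟨1, hr⟩ = -2) :
    modifiedE M - coupB r n * (chainF n)⁻¹ * (coupB r n)ᵀ = contractedMatrix M n := by
  have hn' : (n : ℝ) + 1 ≠ 0 := by positivity
  ext ⟨i, hi⟩ ⟨j, hj⟩
  rw [Matrix.sub_apply, coupB_mul_inv_chainF_mul_transpose_apply hn, sub_neg_eq_add]
  simp only [modifiedE, contractedMatrix, affineExtension]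
  rcases i with _ | _ | i <;> rcases j with _ | _ | j <;> simp [h00, h11] <;> field_simp <;> ring

theorem insertion_schur_and_quadratic_general (r n : ℕ) (hr : 1 < r) (hn : 0 < n)
    (M : Matrix (Fin r) (Fin r) ℝ)
    (h00 : M ⟨0, pos_of_gt hr⟩ ⟨0, pos_of_gt hr⟩ = -2)
    (h11 : M ⟨1, hr⟩ ⟨1, hr⟩ = -2) :
    IsUnit (chainF n).det ∧
    modifiedE M - coupB r n * (chainF n)⁻¹ * (coupB r n)ᵀ = contractedMatrix M n ∧
    (IsUnit (insertedMatrix M n) →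
      (insertedMatrix M n)⁻¹.toBlocks₁₁ = (contractedMatrix M n)⁻¹) := by
  have hschur := schurComplement_chainF_eq_contractedMatrix hr hn h00 h11
  refine ⟨(isUnit_iff_isUnit_det _).mp (isUnit_chainF n), hschur, fun hunit => ?_⟩
  rw [← hschur]
  exact toBlocks₁₁_inv_fromBlocks (isUnit_chainF n) hunit

/-- **Lemma 1.7 (i) and (iv), matrix form.** For a `(-2)`-insertion, the chain block `F` is
invertible, the Schur complement of `F` in `M'` is the matrix `M_n`, and if `M'` is negative
definite and `c` vanishes on the two props then `c'ᵀ (M')⁻¹ c' = cᵀ (M_n)⁻¹ c`. -/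
theorem insertion_schur_and_quadratic (r n : ℕ) (hr : 2 ≤ r) (hn : 1 ≤ n)
    (M : Matrix (Fin r) (Fin r) ℝ) (hsymm : M.IsSymm)
    (h00 : M ⟨0, by omega⟩ ⟨0, by omega⟩ = -2)
    (h11 : M ⟨1, by omega⟩ ⟨1, by omega⟩ = -2)
    (h01 : M ⟨0, by omega⟩ ⟨1, by omega⟩ = 1)
    (h10 : M ⟨1, by omega⟩ ⟨0, by omega⟩ = 1) :
    IsUnit (chainF n).det ∧
    modifiedE M - coupB r n * (chainF n)⁻¹ * (coupB r n)ᵀ = contractedMatrix M n ∧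
    ((∀ x : Fin r ⊕ Fin n → ℝ, x ≠ 0 → x ⬝ᵥ (insertedMatrix M n *ᵥ x) < 0) →
      ∀ c : Fin r → ℝ, c ⟨0, by omega⟩ = 0 → c ⟨1, by omega⟩ = 0 →
        Sum.elim c (0 : Fin n → ℝ) ⬝ᵥ ((insertedMatrix M n)⁻¹ *ᵥ Sum.elim c (0 : Fin n → ℝ)) =
          c ⬝ᵥ ((contractedMatrix M n)⁻¹ *ᵥ c)) := by
  obtain ⟨hF, hschur, hinv⟩ := insertion_schur_and_quadratic_general r n hr hn M h00 h11
  refine ⟨hF, hschur, fun hneg c _ _ => ?_⟩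
  rw [sumElim_zero_dotProduct_mulVec_sumElim_zero,
    hinv (isUnit_of_dotProduct_mulVec_self_ne_zero fun x hx => (hneg x hx).ne)]
end

section
/- Let r ≥ 2 and let (M_n)_{n ∈ ℕ} be a family of r×r real symmetric negative definite matrices such that (M_n) 1 1 = (M_n) 2 2 = -(n+2)/(n+1), (M_n) 1 2 = (M_n) 2 1 = 1/(n+1), all other entries of M_n are independent of n, and all off-diagonal entries of every M_n are nonnegative. Let c ∈ ℝ^r satisfy c i ≥ 0 for all i and c 1 = c 2 = 0, and set m = (M_0)⁻¹ c and m' = (M_n)⁻¹ c. Then -m'ᵀ M_n m' = -mᵀ M_0 m + (n/(n+1))·(m 1 - m 2)·(m' 1 - m' 2). -/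
open Matrix

/-!
Only the block of `M_n` on the first two indices depends on `n`, and there
`M_n - M_0 = (n/(n+1)) • u uᵀ` with `u = e₁ - e₂`. Since `M_0 m = c = M_n m'` and `M_0` is
symmetric, `mᵀ M_0 m - m'ᵀ M_n m' = mᵀ (M_n - M_0) m' = (n/(n+1)) (uᵀ m) (uᵀ m')`.
-/

section

variable {ι R : Type*} [Fintype ι]

theorem det_ne_zero_of_dotProduct_mulVec_ne_zero [DecidableEq ι] [CommRing R] [IsDomain R]
    {A : Matrix ι ι R} (hA : ∀ x : ι → R, x ≠ 0 → x ⬝ᵥ (A *ᵥ x) ≠ 0) : A.det ≠ 0 := by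
  intro hdet
  obtain ⟨v, hv, hAv⟩ := exists_mulVec_eq_zero_iff.mpr hdet
  exact hA v hv (by rw [hAv, dotProduct_zero])

theorem mulVec_inv_mulVec_of_dotProduct_mulVec_ne_zero [DecidableEq ι] [Field R]
    {A : Matrix ι ι R} (hA : ∀ x : ι → R, x ≠ 0 → x ⬝ᵥ (A *ᵥ x) ≠ 0) (c : ι → R) :
    A *ᵥ (A⁻¹ *ᵥ c) = c := by
  have hdet : IsUnit A.det := (det_ne_zero_of_dotProduct_mulVec_ne_zero hA).isUnit
  rw [mulVec_mulVec, mul_nonsing_inv A hdet, one_mulVec]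

theorem dotProduct_mulVec_sub_dotProduct_mulVec_of_isSymm [CommRing R] {A B : Matrix ι ι R}
    (hA : A.IsSymm) {x y : ι → R} (hxy : A *ᵥ x = B *ᵥ y) :
    x ⬝ᵥ (A *ᵥ x) - y ⬝ᵥ (B *ᵥ y) = x ⬝ᵥ ((B - A) *ᵥ y) := by
  have hswap : y ⬝ᵥ (A *ᵥ x) = x ⬝ᵥ (A *ᵥ y) := by
    rw [dotProduct_mulVec, ← mulVec_transpose, hA.eq, dotProduct_comm]
  rw [sub_mulVec, dotProduct_sub, ← hxy, hswap]

theorem dotProduct_smul_vecMulVec_mulVec {κ : Type*} [Fintype κ] [CommSemiring R] (t : R)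
    (u x : ι → R) (v y : κ → R) :
    x ⬝ᵥ ((t • vecMulVec u v) *ᵥ y) = t * (x ⬝ᵥ u) * (v ⬝ᵥ y) := by
  rw [smul_mulVec, vecMulVec_mulVec, op_smul_eq_smul, dotProduct_smul, dotProduct_smul,
    smul_eq_mul, smul_eq_mul]
  ring

end

theorem eq_smul_vecMulVec_single_sub_single {ι R : Type*} [DecidableEq ι] [NonAssocRing R]
    {D : Matrix ι ι R} {p q : ι} (hpq : p ≠ q) {t : R}
    (hpp : D p p = t) (hqq : D q q = t) (hpq' : D p q = -t) (hqp : D q p = -t)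
    (hD : ∀ i j, ¬((i = p ∨ i = q) ∧ (j = p ∨ j = q)) → D i j = 0) :
    D = t • vecMulVec (Pi.single p 1 - Pi.single q 1) (Pi.single p 1 - Pi.single q 1) := by
  ext i j
  by_cases hij : (i = p ∨ i = q) ∧ (j = p ∨ j = q)
  · obtain ⟨rfl | rfl, rfl | rfl⟩ := hij <;> simp [vecMulVec_apply, hpq.symm, *]
  · rw [hD i j hij]
    rcases not_and_or.mp hij with hi | hj
    · obtain ⟨hip, hiq⟩ := not_or.mp hi
      simp [vecMulVec_apply, hip, hiq]
    · obtain ⟨hjp, hjq⟩ := not_or.mp hj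
      simp [vecMulVec_apply, hjp, hjq]

theorem insertion_quadratic_difference_general {ι K : Type*} [Fintype ι] [Field K]
    {M₀ M : Matrix ι ι K} (hM₀ : M₀.IsSymm) (hM : M.IsSymm) {p q : ι} (hpq : p ≠ q)
    {t : K} (ht : t + 1 ≠ 0)
    (hM₀pp : M₀ p p = -2) (hM₀qq : M₀ q q = -2) (hM₀pq : M₀ p q = 1)
    (hMpp : M p p = -(t + 2) / (t + 1)) (hMqq : M q q = -(t + 2) / (t + 1))
    (hMpq : M p q = 1 / (t + 1))
    (hconst : ∀ i j, ¬((i = p ∨ i = q) ∧ (j = p ∨ j = q)) → M i j = M₀ i j)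
    {m m' : ι → K} (hmm' : M₀ *ᵥ m = M *ᵥ m') :
    -(m' ⬝ᵥ (M *ᵥ m')) =
      -(m ⬝ᵥ (M₀ *ᵥ m)) + t / (t + 1) * (m p - m q) * (m' p - m' q) := by
  classical
  let u : ι → K := Pi.single p 1 - Pi.single q 1
  have hdiag : -(t + 2) / (t + 1) - -2 = t / (t + 1) := by field_simp; ring
  have hoff : 1 / (t + 1) - 1 = -(t / (t + 1)) := by field_simp; ring
  have hrank : M - M₀ = (t / (t + 1)) • vecMulVec u u :=
    eq_smul_vecMulVec_single_sub_single hpq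
      (by rw [Matrix.sub_apply, hMpp, hM₀pp, hdiag])
      (by rw [Matrix.sub_apply, hMqq, hM₀qq, hdiag])
      (by rw [Matrix.sub_apply, hMpq, hM₀pq, hoff])
      (by rw [Matrix.sub_apply, hM.apply, hM₀.apply, hMpq, hM₀pq, hoff])
      (fun i j hij => by rw [Matrix.sub_apply, hconst i j hij, sub_self])
  have hu : ∀ x, u ⬝ᵥ x = x p - x q := fun x => by
    simp only [u, sub_dotProduct, single_one_dotProduct]
  have hdiff : m ⬝ᵥ (M₀ *ᵥ m) - m' ⬝ᵥ (M *ᵥ m') =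
      t / (t + 1) * (m p - m q) * (m' p - m' q) := by
    rw [dotProduct_mulVec_sub_dotProduct_mulVec_of_isSymm hM₀ hmm', hrank,
      dotProduct_smul_vecMulVec_mulVec, dotProduct_comm m u, hu, hu]
  linear_combination hdiff

/-- **Lemma 1.8(ii).** For the family `M_n` of intersection matrices arising from a
`(-2)`-insertion of a chain of `n` `(-2)`-curves, with `m = M₀⁻¹ c` and `m' = M_n⁻¹ c`,
`-m'ᵀ M_n m' = -mᵀ M₀ m + (n/(n+1))·(m₁ - m₂)·(m'₁ - m'₂)`. -/
theorem insertion_quadratic_difference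
    (r : ℕ) (hr : 2 ≤ r) (N : ℕ → Matrix (Fin r) (Fin r) ℝ)
    (hsymm : ∀ n : ℕ, (N n).IsSymm)
    (hnegdef : ∀ n : ℕ, ∀ x : Fin r → ℝ, x ≠ 0 → x ⬝ᵥ (N n *ᵥ x) < 0)
    (h00 : ∀ n : ℕ, N n ⟨0, by omega⟩ ⟨0, by omega⟩ = -((n : ℝ) + 2) / ((n : ℝ) + 1))
    (h11 : ∀ n : ℕ, N n ⟨1, by omega⟩ ⟨1, by omega⟩ = -((n : ℝ) + 2) / ((n : ℝ) + 1))
    (h01 : ∀ n : ℕ, N n ⟨0, by omega⟩ ⟨1, by omega⟩ = 1 / ((n : ℝ) + 1))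
    (h10 : ∀ n : ℕ, N n ⟨1, by omega⟩ ⟨0, by omega⟩ = 1 / ((n : ℝ) + 1))
    (hconst : ∀ n k : ℕ, ∀ i j : Fin r, ¬((i : ℕ) ≤ 1 ∧ (j : ℕ) ≤ 1) → N n i j = N k i j)
    (hoffdiag : ∀ n : ℕ, ∀ i j : Fin r, i ≠ j → 0 ≤ N n i j)
    (c : Fin r → ℝ) (hc : ∀ i, 0 ≤ c i)
    (hc0 : c ⟨0, by omega⟩ = 0) (hc1 : c ⟨1, by omega⟩ = 0)
    (n : ℕ)
    (m : Fin r → ℝ) (hm : m = (N 0)⁻¹ *ᵥ c)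
    (m' : Fin r → ℝ) (hm' : m' = (N n)⁻¹ *ᵥ c) :
    - (m' ⬝ᵥ (N n *ᵥ m')) =
      - (m ⬝ᵥ (N 0 *ᵥ m)) +
        ((n : ℝ) / ((n : ℝ) + 1)) * (m ⟨0, by omega⟩ - m ⟨1, by omega⟩) *
          (m' ⟨0, by omega⟩ - m' ⟨1, by omega⟩) := by
  have hsolve : ∀ k, N k *ᵥ ((N k)⁻¹ *ᵥ c) = c := fun k =>
    mulVec_inv_mulVec_of_dotProduct_mulVec_ne_zero (fun x hx => (hnegdef k x hx).ne) c
  exact insertion_quadratic_difference_general (hsymm 0) (hsymm n) (by simp) (by positivity)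
    (by simp [h00]) (by simp [h11]) (by simp [h01]) (h00 n) (h11 n) (h01 n)
    (fun i j hij => hconst n 0 i j (by simp only [Fin.ext_iff] at hij; omega))
    (by rw [hm, hm', hsolve, hsolve])
end

section
/- Let r ≥ 2 and let (M_n)_{n ∈ ℕ} be a family of r×r real symmetric negative definite matrices such that (M_n) 1 1 = (M_n) 2 2 = -(n+2)/(n+1), (M_n) 1 2 = (M_n) 2 1 = 1/(n+1), all other entries of M_n are independent of n, and all off-diagonal entries of every M_n are nonnegative. Let c ∈ ℝ^r satisfy c i ≥ 0 for all i and c 1 = c 2 = 0, and set m = (M_0)⁻¹ c and m' = (M_n)⁻¹ c. Then det(M_n)·(m' 1 - m' 2) = det(M_0)·(m 1 - m 2). -/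
open Matrix

/-!
By Cramer's rule, `det A * (x i - x j)` for a solution of `A x = c` is the difference of the two
determinants obtained from `A` by putting `c` in column `i`, respectively in column `j`.
Since a determinant is alternating, this difference is one determinant, with `c` in column `i` and
the sum of the columns `i` and `j` of `A` in column `j`. A `(-2)`-insertion changes only two columns
of the intersection matrix and preserves their sum, because `-(n + 2) / (n + 1) + 1 / (n + 1) = -1`.
-/

section Cramer

variable {ι R : Type*} [Fintype ι] [DecidableEq ι] [CommRing R]

theorem cramer_mulVec (A : Matrix ι ι R) (x : ι → R) : A.cramer (A *ᵥ x) = A.det • x := by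
  rw [cramer_eq_adjugate_mulVec, mulVec_mulVec, adjugate_mul, smul_mulVec, one_mulVec]

theorem det_updateCol_updateCol_swap (A : Matrix ι ι R) {i j : ι} (hij : i ≠ j) (u v : ι → R) :
    ((A.updateCol i u).updateCol j v).det = -((A.updateCol i v).updateCol j u).det := by
  have hrepeat (w : ι → R) : ((A.updateCol i w).updateCol j w).det = 0 :=
    det_zero_of_column_eq hij fun k => by simp [hij]
  have hadd (w : ι → R) : ((A.updateCol i (u + v)).updateCol j w).det =
      ((A.updateCol i u).updateCol j w).det + ((A.updateCol i v).updateCol j w).det := by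
    simp only [updateCol_comm A hij _ w, det_updateCol_add]
  have hsum := hrepeat (u + v)
  rw [det_updateCol_add, hadd, hadd, hrepeat, hrepeat, zero_add, add_zero] at hsum
  exact eq_neg_of_add_eq_zero_right hsum

theorem cramer_apply_sub_cramer_apply (A : Matrix ι ι R) {i j : ι} (hij : i ≠ j) (c : ι → R) :
    A.cramer c i - A.cramer c j =
      ((A.updateCol i c).updateCol j (A.col i + A.col j)).det := by
  have hself (l : ι) : A.updateCol l (A.col l) = A := updateCol_eq_self A l
  have hi : A.cramer c i = ((A.updateCol i c).updateCol j (A.col j)).det := by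
    rw [updateCol_comm _ hij, hself, cramer_apply]
  have hj : A.cramer c j = -((A.updateCol i c).updateCol j (A.col i)).det := by
    rw [← det_updateCol_updateCol_swap A hij, hself, cramer_apply]
  rw [hi, hj, det_updateCol_add]
  ring

theorem cramer_apply_sub_cramer_apply_congr {A B : Matrix ι ι R} {i j : ι} (hij : i ≠ j)
    (hadd : A.col i + A.col j = B.col i + B.col j)
    (hcol : ∀ l, l ≠ i → l ≠ j → A.col l = B.col l) (c : ι → R) :
    A.cramer c i - A.cramer c j = B.cramer c i - B.cramer c j := by
  rw [cramer_apply_sub_cramer_apply A hij, cramer_apply_sub_cramer_apply B hij, hadd]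
  congr 1
  ext k l
  by_cases hlj : l = j
  · simp [hlj]
  by_cases hli : l = i
  · simp [hli, hij]
  simpa [hlj, hli] using congrFun (hcol l hli hlj) k

theorem insertion_det_relation_general {A B : Matrix ι ι R} {i j : ι} (hij : i ≠ j)
    (hadd : A.col i + A.col j = B.col i + B.col j)
    (hcol : ∀ l, l ≠ i → l ≠ j → A.col l = B.col l)
    {c x y : ι → R} (hx : A *ᵥ x = c) (hy : B *ᵥ y = c) :
    A.det * (x i - x j) = B.det * (y i - y j) :=
  calc A.det * (x i - x j)
    _ = A.cramer c i - A.cramer c j := by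
      rw [← hx, cramer_mulVec, mul_sub, Pi.smul_apply, Pi.smul_apply, smul_eq_mul, smul_eq_mul]
    _ = B.cramer c i - B.cramer c j := cramer_apply_sub_cramer_apply_congr hij hadd hcol c
    _ = B.det * (y i - y j) := by
      rw [← hy, cramer_mulVec, mul_sub, Pi.smul_apply, Pi.smul_apply, smul_eq_mul, smul_eq_mul]

end Cramer

theorem mulVec_eq_of_eq_inv_mulVec {ι K : Type*} [Fintype ι] [DecidableEq ι] [Field K]
    {A : Matrix ι ι K} (hA : ∀ v : ι → K, v ≠ 0 → v ⬝ᵥ (A *ᵥ v) ≠ 0) {c x : ι → K}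
    (hx : x = A⁻¹ *ᵥ c) : A *ᵥ x = c := by
  have hdet : A.det ≠ 0 := fun h => by
    obtain ⟨v, hv, hAv⟩ := exists_mulVec_eq_zero_iff.mpr h
    exact hA v hv (by rw [hAv, dotProduct_zero])
  rw [hx, mulVec_mulVec, mul_nonsing_inv A hdet.isUnit, one_mulVec]

theorem neg_add_two_div_add_one_add_one_div {K : Type*} [Field K] {a : K} (ha : a + 1 ≠ 0) :
    -(a + 2) / (a + 1) + 1 / (a + 1) = -1 := by
  field_simp
  ring

section Insertion

variable {ι K : Type*} {N : ℕ → Matrix ι ι K} {e f : ι}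

theorem insertion_col_eq
    (hconst : ∀ n k i j, ¬((i = e ∨ i = f) ∧ (j = e ∨ j = f)) → N n i j = N k i j)
    (n k : ℕ) (l : ι) (hle : l ≠ e) (hlf : l ≠ f) : (N n).col l = (N k).col l :=
  funext fun i => hconst n k i l fun h => h.2.elim hle hlf

theorem insertion_col_add_col_eq [Field K] [CharZero K]
    (hee : ∀ n : ℕ, N n e e = -((n : K) + 2) / ((n : K) + 1))
    (hff : ∀ n : ℕ, N n f f = -((n : K) + 2) / ((n : K) + 1))
    (hef : ∀ n : ℕ, N n e f = 1 / ((n : K) + 1))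
    (hfe : ∀ n : ℕ, N n f e = 1 / ((n : K) + 1))
    (hconst : ∀ n k i j, ¬((i = e ∨ i = f) ∧ (j = e ∨ j = f)) → N n i j = N k i j)
    (n k : ℕ) : (N n).col e + (N n).col f = (N k).col e + (N k).col f := by
  have hrow (p : ℕ) : -((p : K) + 2) / ((p : K) + 1) + 1 / ((p : K) + 1) = -1 :=
    neg_add_two_div_add_one_add_one_div p.cast_add_one_ne_zero
  ext i
  simp only [Pi.add_apply, col_apply]
  by_cases hi : i = e ∨ i = f
  · rcases hi with rfl | rfl
    · rw [hee, hef, hee, hef, hrow, hrow]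
    · rw [hfe, hff, hfe, hff, add_comm, hrow, add_comm, hrow]
  · rw [hconst n k i e fun h => hi h.1, hconst n k i f fun h => hi h.1]

end Insertion

/-- **Lemma 1.10.** For the family `M_n` of intersection matrices arising from a
`(-2)`-insertion, with `m = M₀⁻¹ c` and `m' = M_n⁻¹ c`, one has
`det(M_n)·(m'₁ - m'₂) = det(M₀)·(m₁ - m₂)`. -/
theorem insertion_det_relation
    (r : ℕ) (hr : 2 ≤ r) (N : ℕ → Matrix (Fin r) (Fin r) ℝ)
    (hsymm : ∀ n : ℕ, (N n).IsSymm)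
    (hnegdef : ∀ n : ℕ, ∀ x : Fin r → ℝ, x ≠ 0 → x ⬝ᵥ (N n *ᵥ x) < 0)
    (h00 : ∀ n : ℕ, N n ⟨0, by omega⟩ ⟨0, by omega⟩ = -((n : ℝ) + 2) / ((n : ℝ) + 1))
    (h11 : ∀ n : ℕ, N n ⟨1, by omega⟩ ⟨1, by omega⟩ = -((n : ℝ) + 2) / ((n : ℝ) + 1))
    (h01 : ∀ n : ℕ, N n ⟨0, by omega⟩ ⟨1, by omega⟩ = 1 / ((n : ℝ) + 1))
    (h10 : ∀ n : ℕ, N n ⟨1, by omega⟩ ⟨0, by omega⟩ = 1 / ((n : ℝ) + 1))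
    (hconst : ∀ n k : ℕ, ∀ i j : Fin r, ¬((i : ℕ) ≤ 1 ∧ (j : ℕ) ≤ 1) → N n i j = N k i j)
    (hoffdiag : ∀ n : ℕ, ∀ i j : Fin r, i ≠ j → 0 ≤ N n i j)
    (c : Fin r → ℝ) (hc : ∀ i, 0 ≤ c i)
    (hc0 : c ⟨0, by omega⟩ = 0) (hc1 : c ⟨1, by omega⟩ = 0)
    (n : ℕ)
    (m : Fin r → ℝ) (hm : m = (N 0)⁻¹ *ᵥ c)
    (m' : Fin r → ℝ) (hm' : m' = (N n)⁻¹ *ᵥ c) :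
    (N n).det * (m' ⟨0, by omega⟩ - m' ⟨1, by omega⟩) =
      (N 0).det * (m ⟨0, by omega⟩ - m ⟨1, by omega⟩) := by
  have hblock (n k : ℕ) (i j : Fin r) (hij : ¬((i = ⟨0, by omega⟩ ∨ i = ⟨1, by omega⟩) ∧
      (j = ⟨0, by omega⟩ ∨ j = ⟨1, by omega⟩))) : N n i j = N k i j := by
    simp only [Fin.ext_iff] at hij
    exact hconst n k i j (by omega)
  exact insertion_det_relation_general (by simp)
    (insertion_col_add_col_eq h00 h11 h01 h10 hblock n 0) (insertion_col_eq hblock n 0)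
    (mulVec_eq_of_eq_inv_mulVec (fun x hx => (hnegdef n x hx).ne) hm')
    (mulVec_eq_of_eq_inv_mulVec (fun x hx => (hnegdef 0 x hx).ne) hm)
end

section
/- Let r ≥ 2 and let (M_n)_{n ∈ ℕ} be a family of r×r real symmetric negative definite matrices such that (M_n) 1 1 = (M_n) 2 2 = -(n+2)/(n+1), (M_n) 1 2 = (M_n) 2 1 = 1/(n+1), all other entries of M_n are independent of n, and all off-diagonal entries of every M_n are nonnegative. Let c ∈ ℝ^r satisfy c i ≥ 0 for all i and c 1 = c 2 = 0, and set m = (M_0)⁻¹ c. Then -cᵀ (M_n)⁻¹ c = -cᵀ (M_0)⁻¹ c + (n/(n+1))·(det(M_0)/det(M_n))·(m 1 - m 2)², and det(M_0)/det(M_n) > 0, so in particular -cᵀ (M_n)⁻¹ c ≥ -cᵀ (M_0)⁻¹ c. -/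
open Matrix

/-!
Only the four entries in the rows and columns `p`, `q` of the two curves that met change, and `M n`
is the symmetric rank-one update `M 0 + (n / (n + 1)) • u uᵀ` with `u = e_p - e_q`. For an update
`B = A + u vᵀ` the row vectors `det B • vᵀ B⁻¹` and `det A • vᵀ A⁻¹` agree, so the resolvent
identity `A⁻¹ - B⁻¹ = A⁻¹ (B - A) B⁻¹` becomes a Sherman–Morrison formula with the factor
`det A / det B`, which is positive because negative definite matrices of the same size have
determinants of the same sign.
-/

section RankOneUpdate

variable {ι R K : Type*} [Fintype ι] [DecidableEq ι] [CommRing R] [Field K]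

theorem det_add_vecMulVec {A : Matrix ι ι R} (hA : IsUnit A) (u v : ι → R) :
    (A + vecMulVec u v).det = A.det * (1 + v ᵥ* A⁻¹ ⬝ᵥ u) := by
  rw [vecMulVec_eq Unit, det_add_replicateCol_mul_replicateRow ((isUnit_iff_isUnit_det A).mp hA),
    ← replicateRow_vecMul, det_unique (n := Unit), Matrix.add_apply, one_apply_eq,
    replicateRow_mul_replicateCol_apply]

theorem det_smul_vecMul_inv_add_vecMulVec {A : Matrix ι ι R} {u v : ι → R} (hA : IsUnit A)
    (hB : IsUnit (A + vecMulVec u v)) :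
    (A + vecMulVec u v).det • v ᵥ* (A + vecMulVec u v)⁻¹ = A.det • v ᵥ* A⁻¹ := by
  have hAA : A⁻¹ * A = 1 := nonsing_inv_mul A ((isUnit_iff_isUnit_det A).mp hA)
  have hBB := mul_nonsing_inv _ ((isUnit_iff_isUnit_det _).mp hB)
  have hmul : v ᵥ* A⁻¹ ᵥ* (A + vecMulVec u v) = (1 + v ᵥ* A⁻¹ ⬝ᵥ u) • v := by
    rw [vecMul_add, vecMul_vecMul, hAA, vecMul_one, vecMul_vecMulVec, add_smul, one_smul]
  calc (A + vecMulVec u v).det • v ᵥ* (A + vecMulVec u v)⁻¹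
      = A.det • ((1 + v ᵥ* A⁻¹ ⬝ᵥ u) • v) ᵥ* (A + vecMulVec u v)⁻¹ := by
        rw [det_add_vecMulVec hA, smul_vecMul, smul_smul]
    _ = A.det • v ᵥ* A⁻¹ := by rw [← hmul, vecMul_vecMul, hBB, vecMul_one]

theorem inv_add_vecMulVec {A : Matrix ι ι K} {u v : ι → K} (hA : IsUnit A)
    (hB : IsUnit (A + vecMulVec u v)) :
    (A + vecMulVec u v)⁻¹ =
      A⁻¹ - (A.det / (A + vecMulVec u v).det) • vecMulVec (A⁻¹ *ᵥ u) (v ᵥ* A⁻¹) := by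
  have hdet : (A + vecMulVec u v).det ≠ 0 := ((isUnit_iff_isUnit_det _).mp hB).ne_zero
  have hrow : v ᵥ* (A + vecMulVec u v)⁻¹ = (A.det / (A + vecMulVec u v).det) • v ᵥ* A⁻¹ := by
    rw [div_eq_inv_mul, mul_smul, ← det_smul_vecMul_inv_add_vecMulVec hA hB, inv_smul_smul₀ hdet]
  have hsub : A⁻¹ - (A + vecMulVec u v)⁻¹ = vecMulVec (A⁻¹ *ᵥ u) (v ᵥ* (A + vecMulVec u v)⁻¹) := by
    rw [inv_sub_inv (iff_of_true hA hB), add_sub_cancel_left, mul_vecMulVec, vecMulVec_mul]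
  rw [← vecMulVec_smul, ← hrow, ← hsub, sub_sub_cancel]

theorem dotProduct_inv_add_smul_vecMulVec_mulVec {A B : Matrix ι ι K} (hsymm : A.IsSymm)
    (hA : IsUnit A) (hB : IsUnit B) {u : ι → K} {t : K} (hupdate : B = A + t • vecMulVec u u)
    (c : ι → K) :
    c ⬝ᵥ (B⁻¹ *ᵥ c) = c ⬝ᵥ (A⁻¹ *ᵥ c) - t * (A.det / B.det) * (u ⬝ᵥ (A⁻¹ *ᵥ c)) ^ 2 := by
  have hswap : c ⬝ᵥ (A⁻¹ *ᵥ u) = u ⬝ᵥ (A⁻¹ *ᵥ c) := by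
    rw [dotProduct_mulVec, ← mulVec_transpose, transpose_nonsing_inv, hsymm.eq, dotProduct_comm]
  have hinv : B⁻¹ = A⁻¹ - (A.det / B.det) • vecMulVec (A⁻¹ *ᵥ (t • u)) (u ᵥ* A⁻¹) := by
    rw [← smul_vecMulVec] at hupdate
    subst hupdate
    exact inv_add_vecMulVec hA hB
  simp only [hinv, sub_mulVec, smul_mulVec, vecMulVec_mulVec, mulVec_smul, dotProduct_sub,
    dotProduct_smul, ← dotProduct_mulVec, op_smul_eq_smul, hswap, smul_eq_mul]
  ring

end RankOneUpdate

theorem eq_add_smul_vecMulVec_single_sub_single {ι R : Type*} [DecidableEq ι] [Ring R]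
    {A B : Matrix ι ι R} {p q : ι} {t : R} (hne : p ≠ q)
    (hpp : B p p = A p p + t) (hqq : B q q = A q q + t)
    (hpq : B p q = A p q - t) (hqp : B q p = A q p - t)
    (hother : ∀ i j, ¬((i = p ∨ i = q) ∧ (j = p ∨ j = q)) → B i j = A i j) :
    B = A + t • vecMulVec (Pi.single p 1 - Pi.single q 1) (Pi.single p 1 - Pi.single q 1) := by
  ext i j
  simp only [Matrix.add_apply, Matrix.smul_apply, vecMulVec_apply, Pi.sub_apply, Pi.single_apply,
    smul_eq_mul]
  by_cases hij : (i = p ∨ i = q) ∧ (j = p ∨ j = q)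
  · obtain ⟨rfl | rfl, rfl | rfl⟩ := hij <;> simp [*, hne.symm, sub_eq_add_neg]
  · rcases not_and_or.mp hij with hi | hj
    · obtain ⟨hip, hiq⟩ := not_or.mp hi
      simp [hother i j hij, hip, hiq]
    · obtain ⟨hjp, hjq⟩ := not_or.mp hj
      simp [hother i j hij, hjp, hjq]

section NegativeDefinite

variable {ι : Type*} [Fintype ι]

theorem posDef_neg_of_dotProduct_mulVec_neg {A : Matrix ι ι ℝ} (hsymm : A.IsSymm)
    (hneg : ∀ x : ι → ℝ, x ≠ 0 → x ⬝ᵥ (A *ᵥ x) < 0) : (-A).PosDef := by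
  refine .of_dotProduct_mulVec_pos (IsHermitian.neg ?_) fun x hx => ?_
  · rwa [IsHermitian, conjTranspose_eq_transpose_of_trivial]
  · rw [star_trivial, neg_mulVec, dotProduct_neg]
    exact neg_pos.mpr (hneg x hx)

open scoped ComplexOrder in
theorem det_div_det_pos_of_posDef_neg {𝕜 : Type*} [RCLike 𝕜] [DecidableEq ι] {A B : Matrix ι ι 𝕜}
    (hA : (-A).PosDef) (hB : (-B).PosDef) : 0 < A.det / B.det := by
  have hsign : (-1 : 𝕜) ^ Fintype.card ι ≠ 0 := pow_ne_zero _ (neg_ne_zero.mpr one_ne_zero)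
  rw [← mul_div_mul_left _ _ hsign, ← det_neg, ← det_neg]
  exact div_pos hA.det_pos hB.det_pos

end NegativeDefinite

theorem insertion_negK2_mono_general {ι : Type*} [Fintype ι] [DecidableEq ι] {p q : ι}
    (hne : p ≠ q) {M : ℕ → Matrix ι ι ℝ} (hneg : ∀ n, (-M n).PosDef)
    (hpp : ∀ n : ℕ, M n p p = -((n : ℝ) + 2) / ((n : ℝ) + 1))
    (hqq : ∀ n : ℕ, M n q q = -((n : ℝ) + 2) / ((n : ℝ) + 1))
    (hpq : ∀ n : ℕ, M n p q = 1 / ((n : ℝ) + 1))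
    (hconst : ∀ n k i j, ¬((i = p ∨ i = q) ∧ (j = p ∨ j = q)) → M n i j = M k i j)
    (c : ι → ℝ) (n : ℕ) {m : ι → ℝ} (hm : m = (M 0)⁻¹ *ᵥ c) :
    - (c ⬝ᵥ ((M n)⁻¹ *ᵥ c)) =
      - (c ⬝ᵥ ((M 0)⁻¹ *ᵥ c)) +
        ((n : ℝ) / ((n : ℝ) + 1)) * ((M 0).det / (M n).det) * (m p - m q) ^ 2 ∧
    0 < (M 0).det / (M n).det ∧
    - (c ⬝ᵥ ((M 0)⁻¹ *ᵥ c)) ≤ - (c ⬝ᵥ ((M n)⁻¹ *ᵥ c)) := by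
  have hsymm k : (M k).IsSymm := by
    simpa [IsHermitian, IsSymm, conjTranspose_eq_transpose_of_trivial] using (hneg k).isHermitian
  have hunit k : IsUnit (M k) := IsUnit.neg_iff _ |>.mp (hneg k).isUnit
  have hratio : 0 < (M 0).det / (M n).det := det_div_det_pos_of_posDef_neg (hneg 0) (hneg n)
  have hdiag : -((n : ℝ) + 2) / (n + 1) = -((0 : ℕ) + 2) / ((0 : ℕ) + 1) + n / (n + 1) := by
    field_simp
    push_cast
    ring
  have hoff : 1 / ((n : ℝ) + 1) = 1 / ((0 : ℕ) + 1) - n / (n + 1) := by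
    field_simp
    push_cast
    ring
  have hupdate := eq_add_smul_vecMulVec_single_sub_single (A := M 0) (B := M n) hne
    (by rw [hpp, hpp, hdiag]) (by rw [hqq, hqq, hdiag]) (by rw [hpq, hpq, hoff])
    (by rw [(hsymm n).apply, (hsymm 0).apply, hpq, hpq, hoff]) (hconst n 0)
  have hformula : - (c ⬝ᵥ ((M n)⁻¹ *ᵥ c)) = - (c ⬝ᵥ ((M 0)⁻¹ *ᵥ c)) +
      ((n : ℝ) / ((n : ℝ) + 1)) * ((M 0).det / (M n).det) * (m p - m q) ^ 2 := by
    rw [dotProduct_inv_add_smul_vecMulVec_mulVec (hsymm 0) (hunit 0) (hunit n) hupdate c, ← hm,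
      sub_dotProduct, single_one_dotProduct, single_one_dotProduct, neg_sub', sub_neg_eq_add]
  refine ⟨hformula, hratio, ?_⟩
  rw [hformula]
  exact le_add_of_nonneg_right (by positivity)

/-- **Corollary 1.11** (with the explicit formula from its proof): a `(-2)`-insertion does not
decrease `-K² = -cᵀ M⁻¹ c`:
`-cᵀ M_n⁻¹ c = -cᵀ M₀⁻¹ c + (n/(n+1))·(det M₀ / det M_n)·(m₁ - m₂)²` and
`det M₀ / det M_n > 0`. -/
theorem insertion_negK2_mono
    (r : ℕ) (hr : 2 ≤ r) (N : ℕ → Matrix (Fin r) (Fin r) ℝ)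
    (hsymm : ∀ n : ℕ, (N n).IsSymm)
    (hnegdef : ∀ n : ℕ, ∀ x : Fin r → ℝ, x ≠ 0 → x ⬝ᵥ (N n *ᵥ x) < 0)
    (h00 : ∀ n : ℕ, N n ⟨0, by omega⟩ ⟨0, by omega⟩ = -((n : ℝ) + 2) / ((n : ℝ) + 1))
    (h11 : ∀ n : ℕ, N n ⟨1, by omega⟩ ⟨1, by omega⟩ = -((n : ℝ) + 2) / ((n : ℝ) + 1))
    (h01 : ∀ n : ℕ, N n ⟨0, by omega⟩ ⟨1, by omega⟩ = 1 / ((n : ℝ) + 1))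
    (h10 : ∀ n : ℕ, N n ⟨1, by omega⟩ ⟨0, by omega⟩ = 1 / ((n : ℝ) + 1))
    (hconst : ∀ n k : ℕ, ∀ i j : Fin r, ¬((i : ℕ) ≤ 1 ∧ (j : ℕ) ≤ 1) → N n i j = N k i j)
    (hoffdiag : ∀ n : ℕ, ∀ i j : Fin r, i ≠ j → 0 ≤ N n i j)
    (c : Fin r → ℝ) (hc : ∀ i, 0 ≤ c i)
    (hc0 : c ⟨0, by omega⟩ = 0) (hc1 : c ⟨1, by omega⟩ = 0)
    (n : ℕ)
    (m : Fin r → ℝ) (hm : m = (N 0)⁻¹ *ᵥ c) :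
    - (c ⬝ᵥ ((N n)⁻¹ *ᵥ c)) =
      - (c ⬝ᵥ ((N 0)⁻¹ *ᵥ c)) +
        ((n : ℝ) / ((n : ℝ) + 1)) * ((N 0).det / (N n).det) *
          (m ⟨0, by omega⟩ - m ⟨1, by omega⟩) ^ 2 ∧
    0 < (N 0).det / (N n).det ∧
    - (c ⬝ᵥ ((N 0)⁻¹ *ᵥ c)) ≤ - (c ⬝ᵥ ((N n)⁻¹ *ᵥ c)) := by
  exact insertion_negK2_mono_general (by simp [Fin.ext_iff])
    (fun k => posDef_neg_of_dotProduct_mulVec_neg (hsymm k) (hnegdef k)) h00 h11 h01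
    (fun k l i j h => hconst k l i j (by simp only [Fin.ext_iff] at h; omega)) c n hm
end

section
/- For every rational number q there exists an integer z such that z + q is an accumulation point of S, i.e., for every ε > 0 there exists s ∈ S with s ≠ z + q and |s - (z + q)| < ε. -/
open Matrix

/-!
Attach a chain of `n` rational `(-2)`-curves to a curve of genus `g` and self-intersection
`-(m + 1)`. Only the end curve meets `K` nontrivially, and solving the adjunction equations along
the chain, where the coefficients of `K` are linear, gives
`-K² = (2g - 1 + m)² / (m + 1 / (n + 1))`, which increases to `(2g - 1 + m)² / m` as `n → ∞`.
Modulo `ℤ` this limit is `(2g - 1)² / m`, and every rational number is congruent to some `u / v`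
with `u` odd and positive, hence to `u² / (u v)`.
-/

section Graph

variable {V : Type*} [DecidableEq V] (G : SimpleGraph V) [DecidableRel G.Adj]

/-- The intersection matrix of a configuration of curves with dual graph `G`, in which adjacent
curves meet once and the curve `i` has self-intersection `-b i`. -/
def intersectionMatrix (R : Type*) [Ring R] (b : V → ℕ) : Matrix V V R :=
  G.adjMatrix R - diagonal fun i => (b i : R)

theorem intersectionMatrix_apply_self (R : Type*) [Ring R] (b : V → ℕ) (i : V) :
    intersectionMatrix G R b i i = -(b i : R) := by
  simp [intersectionMatrix]

theorem intersectionMatrix_apply_of_ne (R : Type*) [Ring R] (b : V → ℕ) {i j : V} (hij : i ≠ j) :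
    intersectionMatrix G R b i j = if G.Adj i j then 1 else 0 := by
  simp [intersectionMatrix, hij]

theorem isSymm_intersectionMatrix (R : Type*) [Ring R] (b : V → ℕ) :
    (intersectionMatrix G R b).IsSymm :=
  G.isSymm_adjMatrix.sub (isSymm_diagonal _)

theorem map_intCast_intersectionMatrix (R : Type*) [Ring R] (b : V → ℕ) :
    (intersectionMatrix G ℤ b).map (Int.cast : ℤ → R) = intersectionMatrix G R b := by
  ext i j
  by_cases hij : i = j
  · simp [hij, intersectionMatrix_apply_self]
  · rw [map_apply, intersectionMatrix_apply_of_ne G ℤ b hij,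
      intersectionMatrix_apply_of_ne G R b hij]
    split_ifs <;> simp

theorem fromRel_intersectionMatrix_pos (b : V → ℕ) :
    SimpleGraph.fromRel (fun i j => 0 < intersectionMatrix G ℤ b i j) = G := by
  have hpos (i j : V) (hij : i ≠ j) : 0 < intersectionMatrix G ℤ b i j ↔ G.Adj i j := by
    rw [intersectionMatrix_apply_of_ne G ℤ b hij]
    split_ifs with h <;> simp [h]
  ext i j
  rw [SimpleGraph.fromRel_adj]
  constructor
  · rintro ⟨hij, h | h⟩
    · exact (hpos i j hij).1 h
    · exact ((hpos j i hij.symm).1 h).symm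
  · exact fun h => ⟨h.ne, Or.inl ((hpos i j h.ne).2 h)⟩

variable [Fintype V]

theorem intersectionMatrix_mulVec_apply {R : Type*} [Ring R] (b : V → ℕ) (x : V → R) (i : V) :
    (intersectionMatrix G R b *ᵥ x) i = ∑ j ∈ G.neighborFinset i, x j - b i * x i := by
  simp [intersectionMatrix, sub_mulVec, mulVec_diagonal, SimpleGraph.adjMatrix_mulVec_apply]

theorem dotProduct_intersectionMatrix_mulVec {R : Type*} [CommRing R] (b : V → ℕ) (x : V → R) :
    x ⬝ᵥ (intersectionMatrix G R b *ᵥ x) =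
      -(x ⬝ᵥ (G.lapMatrix R *ᵥ x) + ∑ i, ((b i : R) - G.degree i) * x i ^ 2) := by
  simp only [dotProduct, ← Finset.sum_add_distrib, ← Finset.sum_neg_distrib]
  refine Finset.sum_congr rfl fun i _ => ?_
  rw [intersectionMatrix_mulVec_apply, SimpleGraph.lapMatrix_mulVec_apply]
  ring

variable {G}

theorem dotProduct_intersectionMatrix_mulVec_neg (hG : G.Connected) {b : V → ℕ}
    (hdeg : ∀ i, G.degree i ≤ b i) (hlt : ∃ i, G.degree i < b i) {x : V → ℝ} (hx : x ≠ 0) :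
    x ⬝ᵥ (intersectionMatrix G ℝ b *ᵥ x) < 0 := by
  have hlap : 0 ≤ x ⬝ᵥ (G.lapMatrix ℝ *ᵥ x) := by
    simpa using (G.posSemidef_lapMatrix ℝ).dotProduct_mulVec_nonneg x
  have hterm (i : V) : 0 ≤ ((b i : ℝ) - G.degree i) * x i ^ 2 :=
    mul_nonneg (sub_nonneg.2 (by exact_mod_cast hdeg i)) (sq_nonneg _)
  have hsum : 0 ≤ ∑ i, ((b i : ℝ) - G.degree i) * x i ^ 2 :=
    Finset.sum_nonneg fun i _ => hterm i
  rw [dotProduct_intersectionMatrix_mulVec, neg_lt_zero]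
  by_contra! hle
  have hconst : ∀ i j, G.Reachable i j → x i = x j := by
    rw [← SimpleGraph.lapMatrix_toLinearMap₂'_apply'_eq_zero_iff_forall_reachable,
      toLinearMap₂'_apply']
    linarith
  obtain ⟨k, hk⟩ := hlt
  have hxk : x k = 0 := by
    have hzero := (Finset.sum_eq_zero_iff_of_nonneg fun i _ => hterm i).1
      (by linarith) k (Finset.mem_univ k)
    have hk' : (b k : ℝ) - G.degree k ≠ 0 := sub_ne_zero.2 (by exact_mod_cast hk.ne')
    simpa [hk'] using hzero
  exact hx (funext fun i => (hconst i k (hG i k)).trans hxk)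

end Graph

namespace ResolutionDatum

variable {r : ℕ}

theorem det_ne_zero (D : ResolutionDatum r) : D.M.det ≠ 0 := by
  intro hdet
  have hdet' : (D.M.map (Int.cast : ℤ → ℝ)).det = 0 := by
    rw [← Int.cast_det, hdet, Int.cast_zero]
  obtain ⟨x, hx, hMx⟩ := exists_mulVec_eq_zero_iff.2 hdet'
  simpa [hMx] using D.negdef x hx

theorem negK2_eq_of_mulVec_eq (D : ResolutionDatum r) {y : Fin r → ℚ}
    (hy : D.M.map (Int.cast : ℤ → ℚ) *ᵥ y = D.c) : D.negK2 = -(D.c ⬝ᵥ y) := by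
  have hdet : IsUnit (D.M.map (Int.cast : ℤ → ℚ)).det := by
    rw [← Int.cast_det]
    exact isUnit_iff_ne_zero.2 (Int.cast_ne_zero.2 D.det_ne_zero)
  rw [negK2]
  nth_rw 2 [← hy]
  rw [mulVec_mulVec, nonsing_inv_mul _ hdet, one_mulVec]

variable (G : SimpleGraph (Fin r)) [DecidableRel G.Adj] (b p : Fin r → ℕ) (hG : G.Connected)
  (hdeg : ∀ i, G.degree i ≤ b i) (hlt : ∃ i, G.degree i < b i) (hmin : ∀ i, p i = 0 → 2 ≤ b i)

/-- The resolution datum with dual graph `G`, self-intersections `-b i` and genera `p i`. Negative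
definiteness is ensured by diagonal dominance: `b i` is at least the degree of `i`, and exceeds it
somewhere. -/
def ofGraph : ResolutionDatum r where
  M := intersectionMatrix G ℤ b
  p := p
  symm := isSymm_intersectionMatrix G ℤ b
  negdef x hx := by
    rw [map_intCast_intersectionMatrix]
    exact dotProduct_intersectionMatrix_mulVec_neg hG hdeg hlt hx
  offdiag_nonneg i j hij := by
    rw [intersectionMatrix_apply_of_ne G ℤ b hij]
    split_ifs <;> norm_num
  diag_le_neg_two i hi := by
    have := hmin i hi
    rw [intersectionMatrix_apply_self]
    omega
  connected := by rwa [fromRel_intersectionMatrix_pos]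

theorem ofGraph_c (i : Fin r) :
    (ofGraph G b p hG hdeg hlt hmin).c i = 2 * p i - 2 + b i := by
  simp [c, ofGraph, intersectionMatrix_apply_self]

theorem ofGraph_map_intCast_mulVec_apply {R : Type*} [Ring R] (x : Fin r → R) (i : Fin r) :
    ((ofGraph G b p hG hdeg hlt hmin).M.map (Int.cast : ℤ → R) *ᵥ x) i =
      ∑ j ∈ G.neighborFinset i, x j - b i * x i := by
  rw [ofGraph, map_intCast_intersectionMatrix, intersectionMatrix_mulVec_apply]

end ResolutionDatum

section PathGraph

open SimpleGraph

instance decidableRelPathGraphAdj (n : ℕ) : DecidableRel (pathGraph n).Adj :=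
  fun _ _ => decidable_of_iff _ pathGraph_adj.symm

theorem sum_neighborFinset_pathGraph {R : Type*} [AddCommMonoid R] {n : ℕ} (f : ℕ → R)
    (i : Fin n) :
    ∑ j ∈ (pathGraph n).neighborFinset i, f j =
      (if 0 < (i : ℕ) then f (i - 1) else 0) + if (i : ℕ) + 1 < n then f (i + 1) else 0 := by
  have hsplit (j : ℕ) : (if (i : ℕ) + 1 = j ∨ j + 1 = i then f j else 0) =
      (if j = i - 1 then if 0 < (i : ℕ) then f j else 0 else 0) +
        if j = i + 1 then f j else 0 := by
    grind
  calc ∑ j ∈ (pathGraph n).neighborFinset i, f j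
      = ∑ j : Fin n, if (i : ℕ) + 1 = j ∨ (j : ℕ) + 1 = i then f j else 0 := by
        simp only [neighborFinset_eq_filter, pathGraph_adj, Finset.sum_filter]
    _ = ∑ j ∈ Finset.range n, if (i : ℕ) + 1 = j ∨ j + 1 = i then f j else 0 :=
        Fin.sum_univ_eq_sum_range (fun j => if (i : ℕ) + 1 = j ∨ j + 1 = i then f j else 0) n
    _ = _ := by
        have hi : (i : ℕ) - 1 < n := by omega
        simp [hsplit, Finset.sum_add_distrib, Finset.sum_ite_eq', hi]

theorem degree_pathGraph {n : ℕ} (i : Fin n) :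
    (pathGraph n).degree i =
      (if 0 < (i : ℕ) then 1 else 0) + if (i : ℕ) + 1 < n then 1 else 0 := by
  rw [← card_neighborFinset_eq_degree, Finset.card_eq_sum_ones]
  exact sum_neighborFinset_pathGraph (fun _ => 1) i

end PathGraph

section Chain

variable (n g : ℕ) {m : ℕ} (hm : 0 < m)

/-- A chain of `n` rational `(-2)`-curves followed by a curve of genus `g` and self-intersection
`-(m + 1)`. -/
def chainDatum : ResolutionDatum (n + 1) :=
  .ofGraph (SimpleGraph.pathGraph (n + 1)) (fun i => if i = Fin.last n then m + 1 else 2)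
    (Pi.single (Fin.last n) g) (SimpleGraph.pathGraph_connected n)
    (fun i => by grind [degree_pathGraph])
    ⟨Fin.last n, by grind [degree_pathGraph]⟩
    (fun i _ => by grind)

theorem chainDatum_c :
    (chainDatum n g hm).c = Pi.single (Fin.last n) (2 * (g : ℚ) - 1 + m) := by
  ext i
  rw [chainDatum, ResolutionDatum.ofGraph_c]
  by_cases hi : i = Fin.last n
  · simp only [hi, Pi.single_eq_same, ↓reduceIte, Nat.cast_add, Nat.cast_one]
    ring
  · simp [hi]

theorem chainDatum_mulVec_linear (t : ℚ) :
    ((chainDatum n g hm).M.map (Int.cast : ℤ → ℚ) *ᵥ fun i => t * ((i : ℕ) + 1)) =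
      Pi.single (Fin.last n) (-(t * (m * (n + 1) + 1))) := by
  ext i
  rw [chainDatum, ResolutionDatum.ofGraph_map_intCast_mulVec_apply,
    sum_neighborFinset_pathGraph fun k => t * ((k : ℚ) + 1)]
  -- The linear solution vanishes at the missing left neighbour of the first vertex.
  have hprev : (if 0 < (i : ℕ) then t * (((i - 1 : ℕ) : ℚ) + 1) else 0) = t * (i : ℕ) := by
    split_ifs with hi
    · rw [Nat.cast_pred hi, sub_add_cancel]
    · simp [Nat.eq_zero_of_not_pos hi]
  rw [hprev]
  by_cases hi : i = Fin.last n
  · simp only [hi, Fin.val_last, lt_self_iff_false, ↓reduceIte, add_zero, Nat.cast_add,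
      Nat.cast_one, Pi.single_eq_same]
    ring
  · have hin : (i : ℕ) < n := Fin.val_lt_last hi
    simp only [hi, hin, add_lt_add_iff_right, ↓reduceIte, Nat.cast_add, Nat.cast_one,
      Nat.cast_ofNat, ne_eq, not_false_eq_true, Pi.single_eq_of_ne]
    ring

theorem chainDatum_negK2 :
    (chainDatum n g hm).negK2 = (2 * (g : ℚ) - 1 + m) ^ 2 / (m + 1 / (n + 1)) := by
  have hden : (m : ℚ) * (n + 1) + 1 ≠ 0 := by positivity
  have hsol := chainDatum_mulVec_linear n g hm (-(2 * (g : ℚ) - 1 + m) / (m * (n + 1) + 1))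
  rw [div_mul_cancel₀ _ hden, neg_neg, ← chainDatum_c n g hm] at hsol
  rw [ResolutionDatum.negK2_eq_of_mulVec_eq _ hsol, chainDatum_c, single_dotProduct, Fin.val_last]
  field_simp

end Chain

open Filter Topology in
theorem accPt_negK2Set {g m : ℕ} (hm : 0 < m) (hgm : 2 * g + m ≠ 1) :
    AccPt ((2 * (g : ℝ) - 1 + m) ^ 2 / m) (𝓟 negK2Set) := by
  have hm' : (0 : ℝ) < m := Nat.cast_pos.2 hm
  have hC : 2 * (g : ℝ) - 1 + m ≠ 0 := by
    rw [sub_add_eq_add_sub, sub_ne_zero]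
    exact_mod_cast hgm
  have hlim : Tendsto (fun n : ℕ => (2 * (g : ℝ) - 1 + m) ^ 2 / (m + 1 / ((n : ℝ) + 1)))
      atTop (𝓝 ((2 * (g : ℝ) - 1 + m) ^ 2 / m)) := by
    refine tendsto_const_nhds.div ?_ hm'.ne'
    simpa using tendsto_one_div_add_atTop_nhds_zero_nat.const_add (m : ℝ)
  refine accPt_iff_frequently.2 (hlim.frequently (Frequently.of_forall fun n => ⟨?_, ?_⟩))
  · have hn : (0 : ℝ) < 1 / (n + 1) := by positivity
    exact (div_lt_div_of_pos_left (by positivity) hm' (lt_add_of_pos_right _ hn)).ne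
  · refine ⟨n + 1, n.succ_pos, chainDatum n g hm, ?_⟩
    simp [chainDatum_negK2]

theorem exists_odd_natCast_div_add_intCast (q : ℚ) :
    ∃ (u v : ℕ) (z : ℤ), Odd u ∧ 0 < v ∧ q = u / v + z := by
  -- The summand `q.num + 1` makes the numerator below odd, and `2 * |q.num|` makes it positive.
  set t : ℤ := q.num + 1 + 2 * |q.num| with ht
  have hden : (0 : ℤ) < q.den := mod_cast q.den_pos
  have hodd : Odd (q.num + q.den * t) := by
    have hcoprime : ¬(Even q.num ∧ Even (q.den : ℤ)) := fun ⟨hn, hd⟩ =>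
      Nat.not_coprime_of_dvd_of_dvd one_lt_two (Int.natCast_dvd.1 hn.two_dvd)
        (Int.natCast_dvd_natCast.1 hd.two_dvd) q.reduced
    simp only [ht, Int.even_mul, Int.even_add, ← Int.not_even_iff_odd, even_two,
      Int.not_even_one]
    tauto
  have hpos : 0 < q.num + q.den * t := by
    nlinarith [neg_abs_le q.num, abs_nonneg q.num]
  obtain ⟨u, hu⟩ := Int.eq_ofNat_of_zero_le hpos.le
  refine ⟨u, q.den, -t, by rwa [hu, Int.odd_coe_nat] at hodd, q.den_pos, ?_⟩
  have hu' : (q.num : ℚ) + q.den * t = u := mod_cast hu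
  have hden' : (q.den : ℚ) ≠ 0 := Nat.cast_ne_zero.2 q.den_ne_zero
  rw [← hu', add_div, mul_div_cancel_left₀ _ hden', Rat.num_div_den, Int.cast_neg,
    add_neg_cancel_right]

/-- **Proposition 2.4.** Every rational number is an accumulation point of `{-K²}` modulo `ℤ`. -/
theorem negK2Set_accumulation_mod_int (q : ℚ) :
    ∃ z : ℤ, ∀ ε : ℝ, 0 < ε →
      ∃ s ∈ negK2Set, s ≠ (z : ℝ) + (q : ℝ) ∧ |s - ((z : ℝ) + (q : ℝ))| < ε := by
  obtain ⟨u, v, z, ⟨k, rfl⟩, hv, rfl⟩ := exists_odd_natCast_div_add_intCast q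
  set m : ℕ := (2 * k + 1) * v with hm
  have hmpos : 0 < m := by positivity
  have hlim : ((2 * (k : ℤ) + 1) * (v + 2) - z : ℤ) + (((2 * k + 1 : ℕ) / v + z : ℚ) : ℝ) =
      (2 * ((k + 1 : ℕ) : ℝ) - 1 + m) ^ 2 / m := by
    rw [hm]
    push_cast
    field_simp
    ring
  refine ⟨(2 * k + 1) * (v + 2) - z, fun ε hε => ?_⟩
  obtain ⟨s, ⟨hsε, hs⟩, hne⟩ :=
    accPt_iff_nhds.1 (accPt_negK2Set (g := k + 1) hmpos (by omega)) _ (Metric.ball_mem_nhds _ hε)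
  rw [hlim]
  exact ⟨s, hs, hne, by rwa [← Real.dist_eq]⟩
end
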